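/- There exists a deterministic probability measure μ_f on ℝ, depending only on the density f of the absolutely continuous component of the spectral measure, such that ESD(W_N/√N) converges to μ_f weakly in probability as N → ∞. -/

import Mathlib

open MeasureTheory ProbabilityTheory Filter Real

noncomputable section

/-- The square `(-π, π]²` on which the spectral measure lives. -/
def specBox : Set (ℝ × ℝ) := Set.Ioc (-π) π ×ˢ Set.Ioc (-π) π

/-- `(1/N) ∑_j g(λ_j(A))`, the integral of `g` against the empirical spectral
distribution of a symmetric `N × N` real matrix `A` (junk value `0` if `A` is
not symmetric). -/
def esdEval {N : ℕ} (A : Matrix (Fin N) (Fin N) ℝ) (g : ℝ → ℝ) : ℝ :=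
  if hA : A.IsHermitian then (N : ℝ)⁻¹ * ∑ j, g (hA.eigenvalues j) else 0

/-- The (random) empirical spectral distributions of `A N` converge weakly in
probability to the probability measure `μ`: for every bounded continuous `g`,
`∫ g d(ESD(A N)) → ∫ g dμ` in probability. -/
def ESDTendstoInProb {Ω : Type*} [MeasurableSpace Ω] (P : Measure Ω)
    (A : (N : ℕ) → Ω → Matrix (Fin N) (Fin N) ℝ) (μ : Measure ℝ) : Prop :=
  ∀ g : ℝ → ℝ, Continuous g → (∃ C, ∀ x, |g x| ≤ C) →
    ∀ ε > 0, Tendsto (fun N => P {ω | ε ≤ |esdEval (A N ω) g - ∫ x, g x ∂μ|})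
      atTop (nhds 0)

/-- The symmetric matrix `W_N/√N`, where `W_N(i,j) = X_{i,j} + X_{j,i}`,
`1 ≤ i,j ≤ N`. -/
def scaledW {Ω : Type*} (X : ℤ → ℤ → Ω → ℝ) (N : ℕ) (ω : Ω) :
    Matrix (Fin N) (Fin N) ℝ :=
  fun i j => (Real.sqrt N)⁻¹ *
    (X ((i : ℕ) + 1) ((j : ℕ) + 1) ω + X ((j : ℕ) + 1) ((i : ℕ) + 1) ω)

/-- A centered stationary Gaussian process indexed by `ℤ²` with positive
variance: every finite real linear combination is a centered Gaussian random
variable, and second moments are shift invariant. -/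
structure StatGauss {Ω : Type*} [MeasurableSpace Ω] (P : Measure Ω)
    (X : ℤ → ℤ → Ω → ℝ) : Prop where
  meas : ∀ j k, Measurable (X j k)
  gauss : ∀ c : (ℤ × ℤ) →₀ ℝ, ∃ v : NNReal,
    P.map (fun ω => ∑ p ∈ c.support, c p * X p.1 p.2 ω) = gaussianReal 0 v
  var_pos : 0 < ∫ ω, (X 0 0 ω) ^ 2 ∂P
  stat : ∀ j k u v : ℤ,
    ∫ ω, X j k ω * X (j + u) (k + v) ω ∂P = ∫ ω, X 0 0 ω * X u v ω ∂P

/-- The spectral measure `ν` of the process `X` (from the Herglotz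
representation), together with the standing assumption of the paper:
`ν = ν_ac + ν_d`, where `ν_ac` is absolutely continuous with respect to
Lebesgue measure with density `f ≥ 0` and `ν_d = νd` is discrete (supported on
a countable set). -/
structure SpectralDecomp {Ω : Type*} [MeasurableSpace Ω] (P : Measure Ω)
    (X : ℤ → ℤ → Ω → ℝ) (ν νd : Measure (ℝ × ℝ)) (f : ℝ × ℝ → ℝ) : Prop where
  finite : IsFiniteMeasure ν
  support : ν specBoxᶜ = 0
  herglotz : ∀ u v : ℤ,
    (∫ q, Complex.exp (Complex.I * ((u * q.1 + v * q.2 : ℝ) : ℂ)) ∂ν)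
      = ((∫ ω, X 0 0 ω * X u v ω ∂P : ℝ) : ℂ)
  f_nonneg : ∀ q, 0 ≤ f q
  f_meas : Measurable f
  discrete : ∃ s : Set (ℝ × ℝ), s.Countable ∧ νd sᶜ = 0
  decomp : ν = (volume.restrict specBox).withDensity
      (fun q => ENNReal.ofReal (f q)) + νd

/-!
For a symmetric matrix `A`, the characteristic function of its empirical spectral distribution is
`N⁻¹ tr exp(irA)`. By Duhamel's formula, perturbing `A` by `D` changes it by at most `|r| / N` times
the largest pairing of `D` with a unitary matrix in the trace. If `D` comes from an independent
stationary field of spectral mass `δ`, bounding the pairing by the Frobenius norm gives `O(√δ)`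
uniformly in `N`; if `D` comes from an atom of the spectral measure, it is a random plane wave, of
bounded rank, and the change is `O(N^{-1/2})`. Since all but finitely many atoms have small total
mass, the discrete part has no influence on the limit, and the density may be replaced by an
`L¹`-close nonnegative trigonometric polynomial.

The field of a trigonometric polynomial has finitely many nonzero covariances. Gaussian integration
by parts then gives loop equations for expectations of products of normalized traces of words in
`A` and truncated shifts, which up to `O(1/N)` have one solution for all `N`, multiplicative in the
words. So the moments of the empirical distribution converge in mean square, with a limit depending
only on the covariances and with the bound `(4S)^m m!` on the `2m`-th moment, `S` the sum of the
absolute covariances of the symmetrized field; so the Taylor series of the characteristic function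
converges.

Lévy's continuity theorem turns the limit of the characteristic functions into the measure `μ_f`.
Convergence in probability of `∫ g` against the empirical distributions follows by applying it to
two replicas drawn independently from the same empirical distribution, whose joint law determines
the second moment of `∫ g`.
-/

open scoped Matrix ENNReal NNReal Topology

section UnitaryExponential

variable {𝔸 F : Type*} [NormedRing 𝔸] [NormedAlgebra ℂ 𝔸] [CompleteSpace 𝔸] [StarRing 𝔸]
  [ContinuousStar 𝔸] [StarModule ℂ 𝔸] [NormedAddCommGroup F] [NormedSpace ℝ F]

lemma exp_I_smul_mem_unitary {a : 𝔸} (ha : IsSelfAdjoint a) (t : ℝ) :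
    NormedSpace.exp (t • Complex.I • a) ∈ unitary 𝔸 := by
  let := NormedAlgebra.restrictScalars ℚ ℂ 𝔸
  refine NormedSpace.exp_mem_unitary_of_mem_skewAdjoint ?_
  simp [skewAdjoint.mem_iff, star_smul, ha.star_eq]

/-- Duhamel's formula: `e^{ia} - e^{ib}` is the integral over `t ∈ [0, 1]` of
`e^{ita} i (a - b) e^{i(1-t)b}`. -/
lemma norm_map_exp_sub_map_exp_le (φ : 𝔸 →L[ℝ] F) {a b : 𝔸} (ha : IsSelfAdjoint a)
    (hb : IsSelfAdjoint b) {C : ℝ}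
    (hC : ∀ u ∈ unitary 𝔸, ∀ v ∈ unitary 𝔸, ‖φ (u * (Complex.I • (a - b)) * v)‖ ≤ C) :
    ‖φ (NormedSpace.exp (Complex.I • a)) - φ (NormedSpace.exp (Complex.I • b))‖ ≤ C := by
  set U : ℝ → 𝔸 := fun t => NormedSpace.exp (t • Complex.I • a)
  set V : ℝ → 𝔸 := fun t => NormedSpace.exp ((1 - t) • Complex.I • b)
  have hU (t : ℝ) : HasDerivAt U (U t * (Complex.I • a)) t := hasDerivAt_exp_smul_const _ _
  have hV (t : ℝ) : HasDerivAt V (-(Complex.I • b * V t)) t := by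
    have hscomp := (hasDerivAt_exp_smul_const' (Complex.I • b) (1 - t)).scomp t
      ((hasDerivAt_id t).const_sub 1)
    rw [neg_one_smul] at hscomp
    exact hscomp
  have hUV (t : ℝ) : HasDerivAt (fun s => φ (U s * V s))
      (φ (U t * (Complex.I • (a - b)) * V t)) t := by
    have hmul := (hU t).mul (hV t)
    rw [show U t * (Complex.I • a) * V t + U t * -(Complex.I • b * V t) =
      U t * (Complex.I • (a - b)) * V t by rw [smul_sub]; noncomm_ring] at hmul
    exact φ.hasFDerivAt.comp_hasDerivAt t hmul
  have h01 := norm_image_sub_le_of_norm_deriv_le_segment_01'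
    (fun t _ => (hUV t).hasDerivWithinAt)
    fun t _ => hC _ (exp_I_smul_mem_unitary ha t) _ (exp_I_smul_mem_unitary hb _)
  simpa [U, V] using h01

end UnitaryExponential

section EmpiricalSpectralDistribution

variable {n : Type*} [Fintype n]

section UnitaryInvariance

open scoped Matrix.Norms.L2Operator

lemma norm_dotProduct_le (x y : n → ℂ) :
    ‖x ⬝ᵥ y‖ ≤ √(∑ i, ‖x i‖ ^ 2) * √(∑ i, ‖y i‖ ^ 2) := by
  refine (norm_sum_le _ _).trans ?_
  simp only [norm_mul]
  exact Real.sum_mul_le_sqrt_mul_sqrt _ _ _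

lemma sum_norm_sq_mulVec_of_mem_unitary [DecidableEq n] {Q : Matrix n n ℂ}
    (hQ : Q ∈ unitary (Matrix n n ℂ)) (x : n → ℂ) :
    ∑ i, ‖(Q *ᵥ x) i‖ ^ 2 = ∑ i, ‖x i‖ ^ 2 := by
  have hself (y : n → ℂ) : ((∑ i, ‖y i‖ ^ 2 : ℝ) : ℂ) = star y ⬝ᵥ y := by
    simp [dotProduct, Complex.conj_mul']
  have : ((∑ i, ‖(Q *ᵥ x) i‖ ^ 2 : ℝ) : ℂ) = (∑ i, ‖x i‖ ^ 2 : ℝ) := by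
    rw [hself, hself, Matrix.star_mulVec, Matrix.dotProduct_mulVec, Matrix.vecMul_vecMul,
      ← Matrix.star_eq_conjTranspose, Unitary.star_mul_self_of_mem hQ, Matrix.vecMul_one]
  exact_mod_cast this

lemma sum_sum_norm_sq_of_mem_unitary [DecidableEq n] {Q : Matrix n n ℂ}
    (hQ : Q ∈ unitary (Matrix n n ℂ)) :
    ∑ i, ∑ j, ‖Q i j‖ ^ 2 = Fintype.card n := by
  have hcol (j : n) : ∑ i, ‖Q i j‖ ^ 2 = 1 := by
    simpa [Matrix.mulVec_single_one, Pi.single_apply, apply_ite]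
      using sum_norm_sq_mulVec_of_mem_unitary hQ (Pi.single j 1)
  rw [Finset.sum_comm]
  simp [hcol]

lemma norm_trace_map_mul_le_frobenius [DecidableEq n] (M : Matrix n n ℝ) {Q : Matrix n n ℂ}
    (hQ : Q ∈ unitary (Matrix n n ℂ)) :
    ‖(M.map Complex.ofReal * Q).trace‖ ≤
      √(Fintype.card n) * √(∑ i, ∑ j, M i j ^ 2) := by
  have hflat : (M.map Complex.ofReal * Q).trace =
      (fun p : n × n => (M p.1 p.2 : ℂ)) ⬝ᵥ fun p => Q p.2 p.1 := by
    simp [Matrix.trace, Matrix.mul_apply, dotProduct, Fintype.sum_prod_type]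
  rw [hflat, mul_comm, ← sum_sum_norm_sq_of_mem_unitary hQ,
    Finset.sum_comm (f := fun i j => ‖Q i j‖ ^ 2)]
  simpa [Fintype.sum_prod_type] using norm_dotProduct_le (fun p : n × n => (M p.1 p.2 : ℂ))
    fun p => Q p.2 p.1

lemma norm_trace_vecMulVec_mul_le [DecidableEq n] (x y : n → ℂ) {Q : Matrix n n ℂ}
    (hQ : Q ∈ unitary (Matrix n n ℂ)) :
    ‖(Matrix.vecMulVec x y * Q).trace‖ ≤ √(∑ i, ‖x i‖ ^ 2) * √(∑ i, ‖y i‖ ^ 2) := by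
  have hrank : (Matrix.vecMulVec x y * Q).trace = y ⬝ᵥ (Q *ᵥ x) := by
    rw [Matrix.vecMulVec_mul, Matrix.trace_vecMulVec, dotProduct_comm, Matrix.dotProduct_mulVec]
  rw [hrank, mul_comm, ← sum_norm_sq_mulVec_of_mem_unitary hQ x, mul_comm]
  exact (norm_dotProduct_le _ _).trans_eq (mul_comm _ _)

lemma norm_trace_exp_sub_trace_exp_le [DecidableEq n] {A B : Matrix n n ℝ}
    (hA : A.IsHermitian) (hB : B.IsHermitian) {C : ℝ}
    (hC : ∀ Q ∈ unitary (Matrix n n ℂ), ‖((A - B).map Complex.ofReal * Q).trace‖ ≤ C) :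
    ‖(NormedSpace.exp (Complex.I • A.map Complex.ofReal)).trace -
      (NormedSpace.exp (Complex.I • B.map Complex.ofReal)).trace‖ ≤ C := by
  have hmap {M : Matrix n n ℝ} (hM : M.IsHermitian) :
      IsSelfAdjoint (M.map Complex.ofReal) := hM.map _ fun x => by simp
  refine norm_map_exp_sub_map_exp_le
    (Matrix.traceLinearMap n ℝ ℂ).toContinuousLinearMap (hmap hA) (hmap hB) fun u hu v hv => ?_
  have hcycle : (u * (Complex.I • (A.map Complex.ofReal - B.map Complex.ofReal)) * v).trace =
      Complex.I * ((A - B).map Complex.ofReal * (v * u)).trace := by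
    rw [Matrix.mul_assoc, Matrix.trace_mul_comm, Matrix.smul_mul, Matrix.smul_mul,
      Matrix.trace_smul, smul_eq_mul, Matrix.map_sub _ (by simp), Matrix.mul_assoc]
  change ‖(u * (Complex.I • (A.map Complex.ofReal - B.map Complex.ofReal)) * v).trace‖ ≤ C
  rw [hcycle, norm_mul, Complex.norm_I, one_mul]
  exact hC _ (mul_mem hv hu)

end UnitaryInvariance

variable [DecidableEq n] {A B : Matrix n n ℝ}

/-- The empirical spectral distribution of a real symmetric matrix, as a measure on `ℝ`. -/
def esd (hA : A.IsHermitian) : Measure ℝ :=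
  (Fintype.card n : ℝ≥0∞)⁻¹ • ∑ j, Measure.dirac (hA.eigenvalues j)

instance isProbabilityMeasure_esd [Nonempty n] (hA : A.IsHermitian) :
    IsProbabilityMeasure (esd hA) where
  measure_univ := by
    simp [esd, ENNReal.inv_mul_cancel]

lemma integral_esd {E : Type*} [NormedAddCommGroup E] [NormedSpace ℝ E] [CompleteSpace E]
    (hA : A.IsHermitian) (g : ℝ → E) :
    ∫ x, g x ∂(esd hA) = (Fintype.card n : ℝ)⁻¹ • ∑ j, g (hA.eigenvalues j) := by
  have hint (j : n) : Integrable g (Measure.dirac (hA.eigenvalues j)) :=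
    integrable_dirac enorm_lt_top
  rw [esd, integral_smul_measure, integral_finsetSum_measure fun j _ => hint j]
  simp

lemma integrable_esd {E : Type*} [NormedAddCommGroup E] [Nonempty n]
    (hA : A.IsHermitian) (g : ℝ → E) : Integrable g (esd hA) :=
  (integrable_finsetSum_measure.2 fun _ _ => integrable_dirac enorm_lt_top).smul_measure
    (by simp)

lemma integral_pow_esd (hA : A.IsHermitian) (k : ℕ) :
    ∫ x, x ^ k ∂(esd hA) = (Fintype.card n : ℝ)⁻¹ * (A ^ k).trace := by
  rw [integral_esd, smul_eq_mul]
  congr 1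
  conv_rhs => rw [hA.spectral_theorem]
  rw [← map_pow, Unitary.conjStarAlgAut_apply, Matrix.trace_mul_cycle]
  simp [Matrix.diagonal_pow, Matrix.trace]

lemma map_ofReal_eq_conj_diagonal (hA : A.IsHermitian) :
    ∃ V : (Matrix n n ℂ)ˣ, A.map Complex.ofReal =
      V * Matrix.diagonal (fun j => (hA.eigenvalues j : ℂ)) * (V⁻¹ : (Matrix n n ℂ)ˣ) := by
  let V : (Matrix n n ℝ)ˣ := Unitary.toUnits hA.eigenvectorUnitary
  refine ⟨Units.map Complex.ofRealHom.mapMatrix.toMonoidHom V, ?_⟩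
  have hA' : A = V * Matrix.diagonal hA.eigenvalues * (V⁻¹ : (Matrix n n ℝ)ˣ) := by
    conv_lhs => rw [hA.spectral_theorem, Unitary.conjStarAlgAut_apply]
    rfl
  conv_lhs => rw [hA']
  change Complex.ofRealHom.mapMatrix _ = _
  rw [map_mul, map_mul, RingHom.mapMatrix_apply, RingHom.mapMatrix_apply,
    Matrix.diagonal_map (map_zero _)]
  rfl

lemma charFun_esd (hA : A.IsHermitian) (r : ℝ) :
    charFun (esd hA) r = (Fintype.card n : ℝ)⁻¹ •
      (NormedSpace.exp (Complex.I • (r • A).map Complex.ofReal)).trace := by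
  obtain ⟨V, hV⟩ := map_ofReal_eq_conj_diagonal hA
  have hsmul : Complex.I • (r • A).map Complex.ofReal =
      V * Matrix.diagonal (fun j => (r * hA.eigenvalues j * Complex.I : ℂ)) *
        (V⁻¹ : (Matrix n n ℂ)ˣ) := by
    have : Complex.I • (r • A).map Complex.ofReal = (r * Complex.I) • A.map Complex.ofReal := by
      ext; simp; ring
    rw [this, hV, ← Matrix.smul_mul, ← Matrix.mul_smul, ← Matrix.diagonal_smul]
    congr 3
    ext j
    simp; ring
  rw [hsmul, Matrix.exp_units_conj, Matrix.trace_mul_cycle, Units.inv_mul, Matrix.one_mul,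
    Matrix.exp_diagonal, charFun_apply_real, integral_esd]
  simp [Matrix.trace, Pi.coe_exp, Complex.exp_eq_exp_ℂ]

lemma norm_charFun_esd_sub_le (hA : A.IsHermitian) (hB : B.IsHermitian) (r : ℝ) {C : ℝ}
    (hC : ∀ Q ∈ unitary (Matrix n n ℂ), ‖((A - B).map Complex.ofReal * Q).trace‖ ≤ C) :
    ‖charFun (esd hA) r - charFun (esd hB) r‖ ≤ |r| * ((Fintype.card n : ℝ)⁻¹ * C) := by
  have hrC : ∀ Q ∈ unitary (Matrix n n ℂ),
      ‖((r • A - r • B).map Complex.ofReal * Q).trace‖ ≤ |r| * C := fun Q hQ => by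
    have : (r • A - r • B).map Complex.ofReal = (r : ℂ) • (A - B).map Complex.ofReal := by
      ext; simp; ring
    rw [this, Matrix.smul_mul, Matrix.trace_smul, norm_smul, Complex.norm_real, Real.norm_eq_abs]
    gcongr
    exact hC Q hQ
  have hsymm {M : Matrix n n ℝ} (hM : M.IsHermitian) : (r • M).IsHermitian :=
    IsSelfAdjoint.smul (IsSelfAdjoint.all r) hM
  rw [charFun_esd, charFun_esd, ← smul_sub, norm_smul, norm_inv, Real.norm_natCast,
    mul_left_comm]
  gcongr
  exact norm_trace_exp_sub_trace_exp_le (hsymm hA) (hsymm hB) hrC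

lemma norm_charFun_esd_sub_le_frobenius (hA : A.IsHermitian) (hB : B.IsHermitian) (r : ℝ) :
    ‖charFun (esd hA) r - charFun (esd hB) r‖ ≤
      |r| * √((Fintype.card n : ℝ)⁻¹ * ∑ i, ∑ j, (A i j - B i j) ^ 2) := by
  convert norm_charFun_esd_sub_le hA hB r
    fun Q hQ => norm_trace_map_mul_le_frobenius (A - B) hQ using 2
  rw [← mul_assoc, Real.sqrt_mul (by positivity), Real.sqrt_inv, ← Real.sqrt_div_self,
    div_eq_inv_mul]
  simp

end EmpiricalSpectralDistribution

section RandomMeasures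

variable {E : Type*} [NormedAddCommGroup E] [InnerProductSpace ℝ E] [FiniteDimensional ℝ E]
  [MeasurableSpace E] [BorelSpace E]

/-- Lévy's continuity theorem, without a candidate for the limit measure. -/
lemma exists_charFun_eq_of_tendsto {μ : ℕ → ProbabilityMeasure E} {c : E → ℂ}
    (hc : ContinuousAt c 0)
    (h : ∀ t, Tendsto (fun n => charFun (μ n : Measure E) t) atTop (𝓝 (c t))) :
    ∃ μ₀ : ProbabilityMeasure E, charFun (μ₀ : Measure E) = c := by
  have htight := isTightMeasureSet_of_tendsto_charFun (μ := fun n => (μ n : Measure E)) hc h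
  have hcompact : IsCompact (closure (Set.range μ)) :=
    isCompact_closure_of_isTightMeasureSet (by
      convert htight
      ext
      simp)
  obtain ⟨μ₀, -, φ, hφ, hlim⟩ := hcompact.tendsto_subseq fun n => subset_closure ⟨n, rfl⟩
  refine ⟨μ₀, funext fun t => tendsto_nhds_unique ?_ ((h t).comp hφ.tendsto_atTop)⟩
  exact ProbabilityMeasure.tendsto_iff_tendsto_charFun.1 hlim t

/-- A continuous family of probability measures, regarded as a Markov kernel. -/
def kernelOfContinuous {Ω X : Type*} [TopologicalSpace Ω] [MeasurableSpace Ω]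
    [OpensMeasurableSpace Ω] [TopologicalSpace X] [HasOuterApproxClosed X] [MeasurableSpace X]
    [BorelSpace X] (κ : Ω → ProbabilityMeasure X) (hκ : Continuous κ) : Kernel Ω X where
  toFun ω := κ ω
  measurable' := by
    refine Measurable.measure_of_isPiSystem_of_isProbabilityMeasure
      (BorelSpace.measurable_eq.trans borel_eq_generateFrom_isClosed) isPiSystem_isClosed
      fun F hF => ?_
    refine measurable_of_tendsto_metrizable (fun k => ?_)
      (tendsto_pi_nhds.2 fun ω => HasOuterApproxClosed.tendsto_lintegral_apprSeq hF (κ ω))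
    simpa using ((ProbabilityMeasure.continuous_testAgainstNN_eval
      (hF.apprSeq k)).comp hκ).measurable.coe_nnreal_ennreal

instance isMarkovKernel_kernelOfContinuous {Ω X : Type*} [TopologicalSpace Ω] [MeasurableSpace Ω]
    [OpensMeasurableSpace Ω] [TopologicalSpace X] [HasOuterApproxClosed X] [MeasurableSpace X]
    [BorelSpace X] (κ : Ω → ProbabilityMeasure X) (hκ : Continuous κ) :
    IsMarkovKernel (kernelOfContinuous κ hκ) where
  isProbabilityMeasure ω := inferInstanceAs (IsProbabilityMeasure (κ ω : Measure X))

section Replicas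

variable {Ω : Type*} [MeasurableSpace Ω] (m : Measure Ω) [IsProbabilityMeasure m]
  (κ : Kernel Ω E) [IsMarkovKernel κ]

/-- The joint law of two points drawn independently from the same realization of the random
measure `κ`. -/
def replicaMeasure : Measure (WithLp 2 (E × E)) := ((κ ×ₖ κ) ∘ₘ m).map (WithLp.toLp 2)

instance isProbabilityMeasure_replicaMeasure : IsProbabilityMeasure (replicaMeasure m κ) :=
  Measure.isProbabilityMeasure_map (by fun_prop)

lemma integral_replicaMeasure {F : Type*} [NormedAddCommGroup F] [NormedSpace ℝ F]
    {f : WithLp 2 (E × E) → F} (hf : Continuous f) {C : ℝ} (hC : ∀ z, ‖f z‖ ≤ C) :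
    ∫ z, f z ∂(replicaMeasure m κ) =
      ∫ ω, ∫ z, f (WithLp.toLp 2 z) ∂(κ ω).prod (κ ω) ∂m := by
  have hf' : Continuous fun z : E × E => f (WithLp.toLp 2 z) := by fun_prop
  have hint : Integrable (fun z => f (WithLp.toLp 2 z)) ((κ ×ₖ κ) ∘ₘ m) :=
    .of_bound hf'.aestronglyMeasurable C (.of_forall fun z => hC _)
  rw [Measure.comp_eq_comp_const_apply] at hint
  rw [replicaMeasure, integral_map (by fun_prop) hf.aestronglyMeasurable,
    Measure.comp_eq_comp_const_apply, Kernel.integral_comp hint]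
  simp [Kernel.prod_apply]

lemma charFun_replicaMeasure (t : WithLp 2 (E × E)) :
    charFun (replicaMeasure m κ) t = ∫ ω, charFun (κ ω) t.fst * charFun (κ ω) t.snd ∂m := by
  rw [charFun_apply, integral_replicaMeasure m κ (by fun_prop)
    fun z => (Complex.norm_exp_ofReal_mul_I _).le]
  refine integral_congr_ae (.of_forall fun ω => ?_)
  dsimp only
  have := charFun_prod (μ := κ ω) (ν := κ ω) t
  rwa [charFun_apply, integral_map (by fun_prop) (by fun_prop)] at this

lemma integral_replicaMeasure_mul {g : E → ℝ} (hg : Continuous g) {C : ℝ}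
    (hC : ∀ x, |g x| ≤ C) :
    ∫ z, g z.fst * g z.snd ∂(replicaMeasure m κ) = ∫ ω, (∫ x, g x ∂(κ ω)) ^ 2 ∂m := by
  rw [integral_replicaMeasure m κ (by fun_prop) (C := C * C) fun z => by
    rw [norm_mul]
    exact mul_le_mul (hC _) (hC _) (norm_nonneg _) ((abs_nonneg _).trans (hC z.fst))]
  refine integral_congr_ae (.of_forall fun ω => ?_)
  simpa [sq] using integral_prod_mul (μ := κ ω) (ν := κ ω) g g

end Replicas

variable {Ω : ℕ → Type*} [∀ N, MeasurableSpace (Ω N)] {m : ∀ N, Measure (Ω N)}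
  [∀ N, IsProbabilityMeasure (m N)] {κ : ∀ N, Kernel (Ω N) E} [∀ N, IsMarkovKernel (κ N)]
  {μ : Measure E} [IsProbabilityMeasure μ]

lemma measurable_charFun_kernel {Ω : Type*} [MeasurableSpace Ω] (κ : Kernel Ω E)
    [IsMarkovKernel κ] (t : E) : Measurable fun ω => charFun (κ ω) t := by
  simp_rw [charFun_apply]
  have hexp : Measurable fun x : E => Complex.exp (inner ℝ x t * Complex.I) := by fun_prop
  exact hexp.stronglyMeasurable.integral_kernel.measurable

lemma tendsto_charFun_replicaMeasure
    (h : ∀ t, Tendsto (fun N => ∫⁻ ω, ‖charFun (κ N ω) t - charFun μ t‖ₑ ∂(m N)) atTop (𝓝 0))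
    (t : WithLp 2 (E × E)) :
    Tendsto (fun N => charFun (replicaMeasure (m N) (κ N)) t) atTop
      (𝓝 (charFun μ t.fst * charFun μ t.snd)) := by
  have hmul {a b a' b' : ℂ} (ha : ‖a‖ ≤ 1) (hb : ‖b'‖ ≤ 1) :
      ‖a * b - a' * b'‖ₑ ≤ ‖a - a'‖ₑ + ‖b - b'‖ₑ := by
    simp_rw [← ofReal_norm, ← ENNReal.ofReal_add (norm_nonneg _) (norm_nonneg _)]
    refine ENNReal.ofReal_le_ofReal ?_
    calc ‖a * b - a' * b'‖ = ‖(a - a') * b' + a * (b - b')‖ := by congr 1; ring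
      _ ≤ ‖a - a'‖ * ‖b'‖ + ‖a‖ * ‖b - b'‖ := by
        simpa using norm_add_le ((a - a') * b') (a * (b - b'))
      _ ≤ ‖a - a'‖ * 1 + 1 * ‖b - b'‖ := by gcongr
      _ = _ := by ring
  have hlim := (h t.fst).add (h t.snd)
  rw [add_zero] at hlim
  rw [tendsto_iff_edist_tendsto_0]
  refine tendsto_of_tendsto_of_tendsto_of_le_of_le tendsto_const_nhds hlim
    (fun _ => zero_le) fun N => ?_
  have hbdd : Integrable (fun ω => charFun (κ N ω) t.fst * charFun (κ N ω) t.snd) (m N) := by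
    refine .of_bound ((measurable_charFun_kernel _ _).mul
      (measurable_charFun_kernel _ _)).aestronglyMeasurable 1 (.of_forall fun ω => ?_)
    rw [norm_mul]
    exact mul_le_one₀ (norm_charFun_le_one _) (norm_nonneg _) (norm_charFun_le_one _)
  rw [edist_eq_enorm_sub, charFun_replicaMeasure,
    ← lintegral_add_left ((measurable_charFun_kernel _ _).sub_const _).enorm]
  calc ‖∫ ω, charFun (κ N ω) t.fst * charFun (κ N ω) t.snd ∂(m N) -
          charFun μ t.fst * charFun μ t.snd‖ₑ
      = ‖∫ ω, (charFun (κ N ω) t.fst * charFun (κ N ω) t.snd -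
          charFun μ t.fst * charFun μ t.snd) ∂(m N)‖ₑ := by
        rw [integral_sub hbdd (integrable_const _)]
        simp
    _ ≤ _ := (enorm_integral_le_lintegral_enorm _).trans
        (lintegral_mono fun ω => hmul (norm_charFun_le_one _) (norm_charFun_le_one _))

lemma tendsto_integral_sq_of_tendsto_charFun
    (h : ∀ t, Tendsto (fun N => ∫⁻ ω, ‖charFun (κ N ω) t - charFun μ t‖ₑ ∂(m N)) atTop (𝓝 0))
    {g : E → ℝ} (hg : Continuous g) {C : ℝ} (hC : ∀ x, |g x| ≤ C) :
    Tendsto (fun N => ∫ ω, (∫ x, g x ∂(κ N ω)) ^ 2 ∂(m N)) atTop (𝓝 ((∫ x, g x ∂μ) ^ 2)) := by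
  let μ₂ : ProbabilityMeasure (WithLp 2 (E × E)) :=
    ⟨(μ.prod μ).map (WithLp.toLp 2), Measure.isProbabilityMeasure_map (by fun_prop)⟩
  let ρ : ℕ → ProbabilityMeasure (WithLp 2 (E × E)) := fun N =>
    ⟨replicaMeasure (m N) (κ N), inferInstance⟩
  have hweak : Tendsto ρ atTop (𝓝 μ₂) :=
    ProbabilityMeasure.tendsto_of_tendsto_charFun fun t => by
      simpa [μ₂, ρ, charFun_prod] using tendsto_charFun_replicaMeasure h t
  let G : BoundedContinuousFunction (WithLp 2 (E × E)) ℝ :=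
    .ofNormedAddCommGroup (fun z => g z.fst * g z.snd) (by fun_prop) (C * C) fun z => by
      rw [norm_mul]
      exact mul_le_mul (hC _) (hC _) (norm_nonneg _) ((abs_nonneg _).trans (hC z.fst))
  have hG := ProbabilityMeasure.tendsto_iff_forall_integral_tendsto.1 hweak G
  have hρ (N : ℕ) : ∫ z, G z ∂(ρ N : Measure (WithLp 2 (E × E))) =
      ∫ ω, (∫ x, g x ∂(κ N ω)) ^ 2 ∂(m N) := integral_replicaMeasure_mul _ _ hg hC
  have hμ₂ : ∫ z, G z ∂(μ₂ : Measure (WithLp 2 (E × E))) = (∫ x, g x ∂μ) ^ 2 := by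
    refine (integral_map (by fun_prop) G.continuous.aestronglyMeasurable).trans ?_
    simpa [sq, G] using integral_prod_mul (μ := μ) (ν := μ) g g
  simpa only [hρ, hμ₂] using hG

lemma tendsto_measure_le_abs_integral_sub_of_tendsto_charFun
    (h : ∀ t, Tendsto (fun N => ∫⁻ ω, ‖charFun (κ N ω) t - charFun μ t‖ₑ ∂(m N)) atTop (𝓝 0))
    {g : E → ℝ} (hg : Continuous g) {C : ℝ} (hC : ∀ x, |g x| ≤ C) {ε : ℝ} (hε : 0 < ε) :
    Tendsto (fun N => m N {ω | ε ≤ |∫ x, g x ∂(κ N ω) - ∫ x, g x ∂μ|}) atTop (𝓝 0) := by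
  set k := ∫ x, g x ∂μ
  have hint (ρ : Measure E) [IsProbabilityMeasure ρ] : Integrable g ρ :=
    .of_bound hg.aestronglyMeasurable C (.of_forall hC)
  have hcenter (ρ : Measure E) [IsProbabilityMeasure ρ] :
      ∫ x, (g x - k) ∂ρ = ∫ x, g x ∂ρ - k := by
    rw [integral_sub (hint ρ) (integrable_const _)]
    simp
  have hsq := tendsto_integral_sq_of_tendsto_charFun h (g := fun x => g x - k) (by fun_prop)
    (C := C + |k|) fun x => (abs_sub _ _).trans (add_le_add (hC x) le_rfl)
  rw [hcenter, sub_self, zero_pow two_ne_zero] at hsq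
  simp_rw [hcenter] at hsq
  have hlim := ENNReal.tendsto_ofReal (hsq.const_mul (ε ^ 2)⁻¹)
  rw [mul_zero, ENNReal.ofReal_zero] at hlim
  refine tendsto_of_tendsto_of_tendsto_of_le_of_le tendsto_const_nhds hlim
    (fun _ => zero_le) fun N => ?_
  have hint_sq : Integrable (fun ω => (∫ x, g x ∂(κ N ω) - k) ^ 2) (m N) := by
    refine .of_bound (((hg.stronglyMeasurable.integral_kernel (κ := κ N)).measurable.sub_const
      k).pow_const 2).aestronglyMeasurable ((C + |k|) ^ 2) (.of_forall fun ω => ?_)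
    have hle : |∫ x, g x ∂(κ N ω)| ≤ C := by
      simpa using norm_integral_le_of_norm_le_const (μ := κ N ω) (f := g) (.of_forall hC)
    rw [norm_pow]
    gcongr
    exact (norm_sub_le _ _).trans (add_le_add hle le_rfl)
  have hmarkov := mul_meas_ge_le_integral_of_nonneg (.of_forall fun ω => sq_nonneg _) hint_sq
    (ε ^ 2)
  rw [← ofReal_measureReal]
  refine ENNReal.ofReal_le_ofReal ((le_inv_mul_iff₀ (by positivity)).2 ?_)
  simpa only [sq_le_sq, abs_of_pos hε] using hmarkov

end RandomMeasures

section ConvergenceInMean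

variable {F : Type*} [NormedAddCommGroup F]

lemma enorm_sub_le_lintegral_add {Ω : Type*} [MeasurableSpace Ω] {m : Measure Ω}
    [IsProbabilityMeasure m] {φ : Ω → F} (hφ : AEStronglyMeasurable φ m) (c c' : F) :
    ‖c - c'‖ₑ ≤ ∫⁻ ω, ‖φ ω - c‖ₑ ∂m + ∫⁻ ω, ‖φ ω - c'‖ₑ ∂m := by
  have hm : AEMeasurable (fun ω => ‖φ ω - c‖ₑ) m := (hφ.sub aestronglyMeasurable_const).enorm
  calc ‖c - c'‖ₑ = ∫⁻ _, ‖c - c'‖ₑ ∂m := by simp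
    _ ≤ ∫⁻ ω, (‖φ ω - c‖ₑ + ‖φ ω - c'‖ₑ) ∂m := lintegral_mono fun ω => by
      simp only [← edist_eq_enorm_sub]
      exact edist_triangle_left _ _ _
    _ = _ := lintegral_add_left' hm _

lemma exists_tendsto_lintegral_enorm_sub [CompleteSpace F] {Ω : ℕ → Type*}
    [∀ N, MeasurableSpace (Ω N)] {m : ∀ N, Measure (Ω N)} [∀ N, IsProbabilityMeasure (m N)]
    {φ : ∀ N, Ω N → F} (hφ : ∀ N, AEStronglyMeasurable (φ N) (m N))
    (h : ∀ ε : ℝ≥0∞, 0 < ε → ∃ c, ∀ᶠ N in atTop, ∫⁻ ω, ‖φ N ω - c‖ₑ ∂(m N) ≤ ε) :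
    ∃ c, Tendsto (fun N => ∫⁻ ω, ‖φ N ω - c‖ₑ ∂(m N)) atTop (𝓝 0) := by
  choose c hc using fun n : ℕ => h (n : ℝ≥0∞)⁻¹ (by simp)
  have hu := ENNReal.tendsto_inv_nat_nhds_zero
  have hcauchy : CauchySeq c := EMetric.cauchySeq_iff_le_tendsto_0.2
    ⟨fun n : ℕ => (n : ℝ≥0∞)⁻¹ + (n : ℝ≥0∞)⁻¹, fun i j k hi hj => by
      obtain ⟨N, hNi, hNj⟩ := ((hc i).and (hc j)).exists
      calc edist (c i) (c j) ≤ (i : ℝ≥0∞)⁻¹ + (j : ℝ≥0∞)⁻¹ := by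
            rw [edist_eq_enorm_sub]
            exact (enorm_sub_le_lintegral_add (hφ N) _ _).trans (add_le_add hNi hNj)
        _ ≤ (k : ℝ≥0∞)⁻¹ + (k : ℝ≥0∞)⁻¹ := by gcongr, by simpa using hu.add hu⟩
  obtain ⟨a, ha⟩ := cauchySeq_tendsto_of_complete hcauchy
  have hlim : Tendsto (fun n : ℕ => (n : ℝ≥0∞)⁻¹ + ‖c n - a‖ₑ) atTop (𝓝 0) := by
    simpa using hu.add (ha.sub_const a).enorm
  refine ⟨a, ENNReal.tendsto_nhds_zero.2 fun ε hε => ?_⟩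
  obtain ⟨n, hn⟩ := (ENNReal.tendsto_nhds_zero.1 hlim ε hε).exists
  filter_upwards [hc n] with N hN
  calc ∫⁻ ω, ‖φ N ω - a‖ₑ ∂(m N) ≤ ∫⁻ ω, (‖φ N ω - c n‖ₑ + ‖c n - a‖ₑ) ∂(m N) :=
        lintegral_mono fun ω => by simp only [← edist_eq_enorm_sub]; exact edist_triangle _ _ _
    _ ≤ (n : ℝ≥0∞)⁻¹ + ‖c n - a‖ₑ := by
      rw [lintegral_add_right _ measurable_const, lintegral_const, measure_univ, mul_one]
      gcongr
    _ ≤ ε := hn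

variable {V : Type*} [AddMonoid V] [MeasurableSpace V] [MeasurableAdd₂ V] {m ρ : Measure V}
  [IsProbabilityMeasure m] [IsProbabilityMeasure ρ] {φ : V → F} {K : ℝ≥0∞}

lemma lintegral_enorm_sub_conv_le (hφ : StronglyMeasurable φ)
    (hadd : ∀ x, ∫⁻ y, ‖φ (x + y) - φ x‖ₑ ∂ρ ≤ K) (c : F) :
    ∫⁻ x, ‖φ x - c‖ₑ ∂(m ∗ ρ) ≤ ∫⁻ x, ‖φ x - c‖ₑ ∂m + K := by
  have hm : Measurable fun x => ‖φ x - c‖ₑ := (hφ.sub stronglyMeasurable_const).enorm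
  calc ∫⁻ x, ‖φ x - c‖ₑ ∂(m ∗ ρ) = ∫⁻ x, ∫⁻ y, ‖φ (x + y) - c‖ₑ ∂ρ ∂m := Measure.lintegral_conv hm
    _ ≤ ∫⁻ x, ∫⁻ y, (‖φ x - c‖ₑ + ‖φ (x + y) - φ x‖ₑ) ∂ρ ∂m :=
      lintegral_mono fun x => lintegral_mono fun y => by
        simp only [← edist_eq_enorm_sub]
        rw [add_comm]
        exact edist_triangle _ _ _
    _ ≤ ∫⁻ x, (‖φ x - c‖ₑ + K) ∂m := lintegral_mono fun x => by
      rw [lintegral_add_left measurable_const, lintegral_const, measure_univ, mul_one]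
      gcongr
      exact hadd x
    _ = ∫⁻ x, ‖φ x - c‖ₑ ∂m + K := by
      rw [lintegral_add_right _ measurable_const, lintegral_const, measure_univ, mul_one]

lemma lintegral_enorm_sub_le_conv (hφ : StronglyMeasurable φ)
    (hadd : ∀ x, ∫⁻ y, ‖φ (x + y) - φ x‖ₑ ∂ρ ≤ K) (c : F) :
    ∫⁻ x, ‖φ x - c‖ₑ ∂m ≤ ∫⁻ x, ‖φ x - c‖ₑ ∂(m ∗ ρ) + K := by
  have hm : Measurable fun x => ‖φ x - c‖ₑ := (hφ.sub stronglyMeasurable_const).enorm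
  calc ∫⁻ x, ‖φ x - c‖ₑ ∂m = ∫⁻ x, ∫⁻ _, ‖φ x - c‖ₑ ∂ρ ∂m := by simp
    _ ≤ ∫⁻ x, ∫⁻ y, (‖φ (x + y) - c‖ₑ + ‖φ (x + y) - φ x‖ₑ) ∂ρ ∂m :=
      lintegral_mono fun x => lintegral_mono fun y => by
        simp only [← edist_eq_enorm_sub]
        rw [add_comm]
        exact edist_triangle_left _ _ _
    _ ≤ ∫⁻ x, (∫⁻ y, ‖φ (x + y) - c‖ₑ ∂ρ + K) ∂m := lintegral_mono fun x => by
      rw [lintegral_add_left (f := fun y => ‖φ (x + y) - c‖ₑ) (hm.comp (measurable_const_add x))]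
      gcongr
      exact hadd x
    _ = ∫⁻ x, ‖φ x - c‖ₑ ∂(m ∗ ρ) + K := by
      rw [lintegral_add_right _ measurable_const, lintegral_const, measure_univ, mul_one,
        Measure.lintegral_conv hm]

end ConvergenceInMean

section SymmetrizedMatrix

variable {N : ℕ}

/-- The matrix `W_N / √N` built from the entries `x = (X_{j,k})` of the process. -/
def symMatrix (x : EuclideanSpace ℝ (Fin N × Fin N)) : Matrix (Fin N) (Fin N) ℝ :=
  fun j k => (√N)⁻¹ * (x (j, k) + x (k, j))

lemma isHermitian_symMatrix (x : EuclideanSpace ℝ (Fin N × Fin N)) :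
    (symMatrix x).IsHermitian :=
  Matrix.IsHermitian.ext fun j k => by simp [symMatrix, add_comm]

lemma symMatrix_add (x y : EuclideanSpace ℝ (Fin N × Fin N)) :
    symMatrix (x + y) = symMatrix x + symMatrix y := by
  ext j k
  simp only [symMatrix, PiLp.add_apply, Matrix.add_apply]
  ring

lemma symMatrix_sub (x y : EuclideanSpace ℝ (Fin N × Fin N)) :
    symMatrix (x - y) = symMatrix x - symMatrix y := by
  rw [eq_sub_iff_add_eq, ← symMatrix_add, sub_add_cancel]

lemma sum_sum_symMatrix_sq_le (x : EuclideanSpace ℝ (Fin N × Fin N)) :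
    ∑ j, ∑ k, symMatrix x j k ^ 2 ≤ (N : ℝ)⁻¹ * (4 * ‖x‖ ^ 2) := by
  have hnorm : ∑ j, ∑ k, x (j, k) ^ 2 = ‖x‖ ^ 2 := by
    simp [EuclideanSpace.norm_sq_eq, Fintype.sum_prod_type]
  calc ∑ j, ∑ k, symMatrix x j k ^ 2
      ≤ ∑ j, ∑ k, (N : ℝ)⁻¹ * (2 * (x (j, k) ^ 2 + x (k, j) ^ 2)) := by
        gcongr with j _ k _
        rw [symMatrix, mul_pow, inv_pow, Real.sq_sqrt N.cast_nonneg]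
        gcongr
        exact add_sq_le
    _ = (N : ℝ)⁻¹ * (2 * (∑ j, ∑ k, x (j, k) ^ 2 + ∑ j, ∑ k, x (k, j) ^ 2)) := by
        simp only [← Finset.mul_sum, Finset.sum_add_distrib]
    _ = (N : ℝ)⁻¹ * (4 * ‖x‖ ^ 2) := by
        rw [Finset.sum_comm (f := fun j k => x (k, j) ^ 2), hnorm]
        ring

/-- The characteristic function at `r` of the empirical spectral distribution of `symMatrix x`. -/
def symCharFun (r : ℝ) (x : EuclideanSpace ℝ (Fin N × Fin N)) : ℂ :=
  charFun (esd (isHermitian_symMatrix x)) r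

lemma norm_symCharFun_sub_le (r : ℝ) (x y : EuclideanSpace ℝ (Fin N × Fin N)) :
    ‖symCharFun r x - symCharFun r y‖ ≤ 2 * |r| * (N : ℝ)⁻¹ * ‖x - y‖ := by
  refine (norm_charFun_esd_sub_le_frobenius _ _ r).trans ?_
  have hle := sum_sum_symMatrix_sq_le (x - y)
  simp only [symMatrix_sub, Matrix.sub_apply] at hle
  calc |r| * √((Fintype.card (Fin N) : ℝ)⁻¹ * ∑ j, ∑ k, (symMatrix x j k - symMatrix y j k) ^ 2)
      ≤ |r| * √((2 * (N : ℝ)⁻¹ * ‖x - y‖) ^ 2) := by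
        rw [Fintype.card_fin]
        gcongr
        calc (N : ℝ)⁻¹ * ∑ j, ∑ k, (symMatrix x j k - symMatrix y j k) ^ 2
            ≤ (N : ℝ)⁻¹ * ((N : ℝ)⁻¹ * (4 * ‖x - y‖ ^ 2)) := by gcongr
          _ = (2 * (N : ℝ)⁻¹ * ‖x - y‖) ^ 2 := by ring
    _ = 2 * |r| * (N : ℝ)⁻¹ * ‖x - y‖ := by
        rw [Real.sqrt_sq (by positivity)]
        ring

lemma continuous_symCharFun (r : ℝ) : Continuous (symCharFun (N := N) r) :=
  (LipschitzWith.of_dist_le_mul (K := (2 * |r| * (N : ℝ)⁻¹).toNNReal) fun x y => by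
    rw [dist_eq_norm, dist_eq_norm, Real.coe_toNNReal _ (by positivity)]
    exact norm_symCharFun_sub_le r x y).continuous

lemma symCharFun_zero [NeZero N] (r : ℝ) :
    symCharFun r (0 : EuclideanSpace ℝ (Fin N × Fin N)) = 1 := by
  have hzero : symMatrix (0 : EuclideanSpace ℝ (Fin N × Fin N)) = 0 := by
    ext
    simp [symMatrix]
  simp [symCharFun, charFun_esd, hzero, Matrix.trace_one]

variable (N) in
/-- The empirical spectral distribution of `symMatrix x`, as a random measure. -/
def symEsdKernel [NeZero N] : Kernel (EuclideanSpace ℝ (Fin N × Fin N)) ℝ :=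
  kernelOfContinuous (fun x => ⟨esd (isHermitian_symMatrix x), inferInstance⟩)
    (SeqContinuous.continuous fun _ x hu => ProbabilityMeasure.tendsto_of_tendsto_charFun fun r =>
      ((continuous_symCharFun r).tendsto x).comp hu)

instance isMarkovKernel_symEsdKernel [NeZero N] : IsMarkovKernel (symEsdKernel N) :=
  isMarkovKernel_kernelOfContinuous _ _

end SymmetrizedMatrix

section PlaneWaves

variable {N : ℕ}

/-- The phase `j x + k y` of the plane wave with frequency `q = (x, y)` at the site `(j, k)`. -/
def phase (q : ℝ × ℝ) (p : Fin N × Fin N) : ℝ := p.1 * q.1 + p.2 * q.2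

variable (N) in
/-- The real plane wave with frequency `q` and complex amplitude `ζ` on the `N × N` square. -/
def planeWave (q : ℝ × ℝ) (ζ : ℂ) : EuclideanSpace ℝ (Fin N × Fin N) :=
  WithLp.toLp 2 fun p => (ζ * Complex.exp (phase q p * Complex.I)).re

lemma map_ofReal_symMatrix_planeWave (q : ℝ × ℝ) (ζ : ℂ) :
    (symMatrix (planeWave N q ζ)).map Complex.ofReal =
    ((2 * √N : ℝ) : ℂ)⁻¹ •
      let u : Fin N → ℂ := fun j => ζ * Complex.exp ((j * q.1 : ℝ) * Complex.I)
      let v : Fin N → ℂ := fun k => Complex.exp ((k * q.2 : ℝ) * Complex.I)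
      (Matrix.vecMulVec u v + Matrix.vecMulVec (star u) (star v) + Matrix.vecMulVec v u +
        Matrix.vecMulVec (star v) (star u)) := by
  ext j k
  have hre (j k : Fin N) : ((ζ * Complex.exp (phase q (j, k) * Complex.I)).re : ℂ) =
      2⁻¹ * (ζ * Complex.exp ((j * q.1 : ℝ) * Complex.I) * Complex.exp ((k * q.2 : ℝ) * Complex.I) +
        star (ζ * Complex.exp ((j * q.1 : ℝ) * Complex.I)) *
          star (Complex.exp ((k * q.2 : ℝ) * Complex.I))) := by
    rw [Complex.re_eq_add_conj, phase, Complex.ofReal_add, add_mul, Complex.exp_add, ← mul_assoc,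
      map_mul]
    simp only [starRingEnd_apply]
    ring
  simp only [Matrix.map_apply, symMatrix, planeWave, Complex.ofReal_mul, Complex.ofReal_add, hre,
    Complex.ofReal_inv, Matrix.smul_apply, Matrix.add_apply, Matrix.vecMulVec_apply,
    Pi.star_apply, smul_eq_mul, mul_inv]
  push_cast
  ring

/-- A plane wave has rank two, so that after normalization by `√N` its trace norm is of order `√N`;
the Frobenius estimate of the pairing with a unitary matrix would only give order `N`. -/
lemma norm_symCharFun_add_planeWave_sub_le (r : ℝ) (q : ℝ × ℝ) (ζ : ℂ)
    (x : EuclideanSpace ℝ (Fin N × Fin N)) :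
    ‖symCharFun r (x + planeWave N q ζ) - symCharFun r x‖ ≤ 2 * |r| * ‖ζ‖ * (√N)⁻¹ := by
  set u : Fin N → ℂ := fun j => ζ * Complex.exp ((j * q.1 : ℝ) * Complex.I)
  set v : Fin N → ℂ := fun k => Complex.exp ((k * q.2 : ℝ) * Complex.I)
  have hu : √(∑ j, ‖u j‖ ^ 2) = √N * ‖ζ‖ := by
    simp [u, Complex.norm_exp_ofReal_mul_I, -Complex.ofReal_mul, Real.sqrt_mul, Real.sqrt_sq]
  have hv : √(∑ k, ‖v k‖ ^ 2) = √N := by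
    simp [v, Complex.norm_exp_ofReal_mul_I, -Complex.ofReal_mul]
  have hu' : √(∑ j, ‖star u j‖ ^ 2) = √N * ‖ζ‖ := by simpa using hu
  have hv' : √(∑ k, ‖star v k‖ ^ 2) = √N := by simpa using hv
  have hsq : √N * √N = (N : ℝ) := Real.mul_self_sqrt N.cast_nonneg
  refine (norm_charFun_esd_sub_le (C := 2 * √N * ‖ζ‖) _ _ r fun Q hQ => ?_).trans_eq ?_
  · rw [symMatrix_add, add_sub_cancel_left, map_ofReal_symMatrix_planeWave]
    simp only [Matrix.smul_mul, Matrix.add_mul, Matrix.trace_smul, Matrix.trace_add]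
    rw [norm_smul, norm_inv, Complex.norm_real, Real.norm_of_nonneg (by positivity)]
    calc _ ≤ (2 * √N)⁻¹ * (√N * ‖ζ‖ * √N + √N * ‖ζ‖ * √N + √N * (√N * ‖ζ‖) + √N * (√N * ‖ζ‖)) := by
          gcongr
          refine norm_add_le_of_le (norm_add_le_of_le (norm_add_le_of_le ?_ ?_) ?_) ?_
          · simpa only [hu, hv] using norm_trace_vecMulVec_mul_le u v hQ
          · simpa only [hu', hv'] using norm_trace_vecMulVec_mul_le (star u) (star v) hQ
          · simpa only [hu, hv] using norm_trace_vecMulVec_mul_le v u hQ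
          · simpa only [hu', hv'] using norm_trace_vecMulVec_mul_le (star v) (star u) hQ
      _ = 2 * √N * ‖ζ‖ := by
        rcases N.eq_zero_or_pos with rfl | hN
        · simp
        · field_simp
          ring
  · rw [Fintype.card_fin, ← Real.sqrt_div_self]
    ring

end PlaneWaves

section GaussianField

/-- The covariance `∫ cos (u x + v y) ν(dx, dy)` at lag `(u, v)` of the real stationary field with
spectral measure `ν`; equivalently, the real part of the Fourier coefficient of `ν`. -/
def spectralCov (ν : Measure (ℝ × ℝ)) (u v : ℤ) : ℝ := ∫ q, cos (u * q.1 + v * q.2) ∂ν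

variable {N : ℕ} (ν ρ : Measure (ℝ × ℝ))

variable (N) in
/-- The covariance matrix of the restriction to an `N × N` square of the field with spectral
measure `ν`. -/
def covMatrix : Matrix (Fin N × Fin N) (Fin N × Fin N) ℝ :=
  fun a b => spectralCov ν ((a.1 : ℤ) - b.1) ((a.2 : ℤ) - b.2)

lemma covMatrix_apply (a b : Fin N × Fin N) :
    covMatrix N ν a b = ∫ q, cos (phase q a - phase q b) ∂ν := by
  unfold covMatrix spectralCov phase
  congr with q
  push_cast
  ring_nf

lemma covMatrix_self (a : Fin N × Fin N) : covMatrix N ν a a = ν.real Set.univ := by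
  simp [covMatrix_apply]

lemma norm_sq_sum_mul_exp {ι : Type*} [Fintype ι] (t θ : ι → ℝ) :
    ‖∑ a, t a * Complex.exp (θ a * Complex.I)‖ ^ 2 = ∑ a, ∑ b, t a * (cos (θ a - θ b) * t b) := by
  have hre : (∑ a, t a * Complex.exp (θ a * Complex.I)).re = ∑ a, t a * cos (θ a) := by
    simp [Complex.exp_ofReal_mul_I_re]
  have him : (∑ a, t a * Complex.exp (θ a * Complex.I)).im = ∑ a, t a * sin (θ a) := by
    simp [Complex.exp_ofReal_mul_I_im]
  rw [Complex.sq_norm, Complex.normSq_apply, hre, him, Finset.sum_mul_sum, Finset.sum_mul_sum]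
  simp only [← Finset.sum_add_distrib, cos_sub]
  exact Finset.sum_congr rfl fun a _ => Finset.sum_congr rfl fun b _ => by ring

lemma integrable_cos_of_continuous [IsFiniteMeasure ν] {θ : ℝ × ℝ → ℝ} (hθ : Continuous θ) :
    Integrable (fun q => cos (θ q)) ν :=
  .of_bound (by fun_prop) 1 (.of_forall fun q => by simpa using abs_cos_le_one (θ q))

@[fun_prop]
lemma continuous_phase (a : Fin N × Fin N) : Continuous fun q => phase q a := by
  unfold phase
  fun_prop

lemma dotProduct_covMatrix_mulVec [IsFiniteMeasure ν] (t : Fin N × Fin N → ℝ) :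
    t ⬝ᵥ covMatrix N ν *ᵥ t = ∫ q, ‖∑ a, t a * Complex.exp (phase q a * Complex.I)‖ ^ 2 ∂ν := by
  have hint (a b : Fin N × Fin N) :
      Integrable (fun q => t a * (cos (phase q a - phase q b) * t b)) ν :=
    ((integrable_cos_of_continuous ν (by fun_prop)).mul_const _).const_mul _
  simp_rw [norm_sq_sum_mul_exp]
  rw [integral_finsetSum _ fun a _ => integrable_finsetSum _ fun b _ => hint a b]
  simp_rw [integral_finsetSum _ fun b _ => hint _ b, integral_const_mul, integral_mul_const,
    ← covMatrix_apply, dotProduct, Matrix.mulVec, dotProduct, Finset.mul_sum]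

lemma posSemidef_covMatrix [IsFiniteMeasure ν] : (covMatrix N ν).PosSemidef := by
  refine .of_dotProduct_mulVec_nonneg (Matrix.IsHermitian.ext fun a b => ?_) fun t => ?_
  · rw [star_trivial, covMatrix_apply, covMatrix_apply]
    simp_rw [← cos_neg (phase _ b - phase _ a), neg_sub]
  · rw [star_trivial, dotProduct_covMatrix_mulVec]
    positivity

lemma covMatrix_add [IsFiniteMeasure ν] [IsFiniteMeasure ρ] :
    covMatrix N (ν + ρ) = covMatrix N ν + covMatrix N ρ := by
  ext a b
  simp only [Matrix.add_apply, covMatrix_apply]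
  exact integral_add_measure (integrable_cos_of_continuous ν (by fun_prop))
    (integrable_cos_of_continuous ρ (by fun_prop))

variable (N) in
/-- The law of the restriction to an `N × N` square of the centered stationary Gaussian field with
spectral measure `ν`. -/
def fieldLaw : Measure (EuclideanSpace ℝ (Fin N × Fin N)) := multivariateGaussian 0 (covMatrix N ν)

instance isGaussian_fieldLaw : IsGaussian (fieldLaw N ν) := isGaussian_multivariateGaussian

lemma charFun_fieldLaw [IsFiniteMeasure ν] (t : EuclideanSpace ℝ (Fin N × Fin N)) :
    charFun (fieldLaw N ν) t = Complex.exp (-(t ⬝ᵥ covMatrix N ν *ᵥ t : ℝ) / 2) := by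
  rw [fieldLaw, charFun_multivariateGaussian (posSemidef_covMatrix ν)]
  simp [neg_div]

lemma fieldLaw_add [IsFiniteMeasure ν] [IsFiniteMeasure ρ] :
    fieldLaw N (ν + ρ) = fieldLaw N ν ∗ fieldLaw N ρ := by
  refine Measure.ext_of_charFun (funext fun t => ?_)
  rw [charFun_conv, charFun_fieldLaw, charFun_fieldLaw, charFun_fieldLaw, ← Complex.exp_add,
    covMatrix_add, Matrix.add_mulVec, dotProduct_add]
  congr 1
  push_cast
  ring

lemma inner_planeWave (q : ℝ × ℝ) (ζ : ℂ) (t : EuclideanSpace ℝ (Fin N × Fin N)) :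
    inner ℝ (planeWave N q ζ) t =
      inner ℝ ζ (star (∑ p, t p * Complex.exp (phase q p * Complex.I))) := by
  rw [Complex.inner, ← Complex.conj_re, map_mul]
  simp only [starRingEnd_apply, star_star, Finset.sum_mul, Complex.re_sum, PiLp.inner_apply,
    planeWave, RCLike.inner_apply, star_trivial]
  refine Finset.sum_congr rfl fun p _ => ?_
  rw [← Complex.re_ofReal_mul]
  ring_nf

@[fun_prop]
lemma continuous_planeWave (q : ℝ × ℝ) : Continuous (planeWave N q) := by
  unfold planeWave
  fun_prop

lemma fieldLaw_smul_dirac (w : ℝ≥0) (q : ℝ × ℝ) :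
    fieldLaw N (w • Measure.dirac q) = (stdGaussian ℂ).map fun ζ => planeWave N q (√w * ζ) := by
  refine Measure.ext_of_charFun (funext fun t => ?_)
  set z : ℂ := ∑ p, t p * Complex.exp (phase q p * Complex.I)
  have hinner (ζ : ℂ) : inner ℝ (planeWave N q (√w * ζ)) t = inner ℝ ζ (√w • star z) := by
    rw [inner_planeWave, ← Complex.real_smul, real_inner_smul_left, real_inner_smul_right]
  have hnorm : ‖√w • star z‖ ^ 2 = t ⬝ᵥ covMatrix N (w • Measure.dirac q) *ᵥ t := by
    rw [dotProduct_covMatrix_mulVec, integral_smul_nnreal_measure, integral_dirac, norm_smul,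
      mul_pow, norm_star, Real.norm_of_nonneg (sqrt_nonneg _), sq_sqrt w.coe_nonneg,
      NNReal.smul_def, smul_eq_mul]
  rw [charFun_fieldLaw, charFun_apply, integral_map (by fun_prop) (by fun_prop)]
  simp_rw [hinner]
  rw [← charFun_apply, charFun_stdGaussian, ← hnorm]
  norm_cast

lemma integral_norm_sq_fieldLaw [IsFiniteMeasure ν] :
    ∫ x, ‖x‖ ^ 2 ∂(fieldLaw N ν) = N ^ 2 * ν.real Set.univ := by
  have hmem (a : Fin N × Fin N) :
      MemLp (fun x : EuclideanSpace ℝ (Fin N × Fin N) => x a) 2 (fieldLaw N ν) :=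
    IsGaussian.memLp_dual _ (EuclideanSpace.proj a) 2 (by simp)
  have hmean (a : Fin N × Fin N) : ∫ x, x a ∂(fieldLaw N ν) = 0 := by
    have := (EuclideanSpace.proj (𝕜 := ℝ) a).integral_comp_id_comm
      (IsGaussian.integrable_id (μ := fieldLaw N ν))
    simpa [fieldLaw] using this
  have hcoord (a : Fin N × Fin N) : ∫ x, x a ^ 2 ∂(fieldLaw N ν) = ν.real Set.univ := by
    rw [← covMatrix_self ν a,
      ← variance_eval_multivariateGaussian (μ := 0) (posSemidef_covMatrix ν)]
    exact (variance_of_integral_eq_zero (hmem a).aemeasurable (hmean a)).symm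
  simp_rw [EuclideanSpace.real_norm_sq_eq]
  rw [integral_finsetSum _ fun a _ => (hmem a).integrable_sq]
  simp only [hcoord]
  simp [sq]

lemma lintegral_enorm_fieldLaw_le [IsFiniteMeasure ν] :
    ∫⁻ x, ‖x‖ₑ ∂(fieldLaw N ν) ≤ ENNReal.ofReal (N * √(ν.real Set.univ)) := by
  have hmem : MemLp (fun x => x) 2 (fieldLaw N ν) := IsGaussian.memLp_two_id
  rw [← ofReal_integral_norm_eq_lintegral_enorm (hmem.integrable one_le_two)]
  gcongr
  refine abs_le_of_sq_le_sq' ?_ (by positivity) |>.2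
  have hvar := variance_nonneg (fun x => ‖x‖) (fieldLaw N ν)
  rw [variance_eq_sub hmem.norm] at hvar
  calc _ ≤ ∫ x, ‖x‖ ^ 2 ∂(fieldLaw N ν) := by simpa using hvar
    _ = _ := by rw [integral_norm_sq_fieldLaw, mul_pow, sq_sqrt (by positivity)]

end GaussianField

section Window

/-- The random vector of the entries `X_{j,k}`, `1 ≤ j, k ≤ N`, of the process. -/
def window {Ω : Type*} (X : ℤ → ℤ → Ω → ℝ) (N : ℕ) (ω : Ω) :
    EuclideanSpace ℝ (Fin N × Fin N) :=
  WithLp.toLp 2 fun p => X ((p.1 : ℕ) + 1) ((p.2 : ℕ) + 1) ω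

lemma scaledW_eq_symMatrix_window {Ω : Type*} (X : ℤ → ℤ → Ω → ℝ) (N : ℕ) (ω : Ω) :
    scaledW X N ω = symMatrix (window X N ω) := rfl

variable {Ω : Type*} [MeasurableSpace Ω] {P : Measure Ω} {X : ℤ → ℤ → Ω → ℝ}
  {ν νd : Measure (ℝ × ℝ)} {f : ℝ × ℝ → ℝ}

lemma integral_sq_of_map_eq_gaussianReal {Y : Ω → ℝ} (hY : Measurable Y) {v : ℝ≥0}
    (h : P.map Y = gaussianReal 0 v) : ∫ ω, Y ω ^ 2 ∂P = v := by
  have hv := variance_id_gaussianReal (μ := 0) (v := v)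
  rw [variance_of_integral_eq_zero aemeasurable_id (by simp), ← h,
    integral_map hY.aemeasurable (by fun_prop)] at hv
  exact hv

lemma StatGauss.exists_map_sum_eq (hX : StatGauss P X) {ι : Type*} [Fintype ι]
    (e : ι ↪ ℤ × ℤ) (c : ι → ℝ) :
    ∃ v, P.map (fun ω => ∑ a, c a * X (e a).1 (e a).2 ω) = gaussianReal 0 v := by
  obtain ⟨v, hv⟩ := hX.gauss (Finsupp.embDomain e (Finsupp.equivFunOnFinite.symm c))
  refine ⟨v, ?_⟩
  rw [← hv]
  congr with ω
  have hsum := Finsupp.sum_embDomain (v := Finsupp.equivFunOnFinite.symm c) (f := e)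
    (g := fun p r => r * X p.1 p.2 ω)
  rw [Finsupp.sum_fintype (Finsupp.equivFunOnFinite.symm c) _ (by simp)] at hsum
  exact hsum.symm

lemma StatGauss.memLp_two (hX : StatGauss P X) (j k : ℤ) : MemLp (X j k) 2 P := by
  obtain ⟨v, hv⟩ := hX.exists_map_sum_eq (Function.Embedding.punit.{1} (j, k)) 1
  have hid := memLp_id_gaussianReal (μ := 0) (v := v) 2
  rw [← hv, memLp_map_measure_iff aestronglyMeasurable_id
    (Finset.measurable_sum _ fun (_ : Unit) _ => (hX.meas _ _).const_mul _).aemeasurable] at hid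
  simp only [Fintype.sum_unique, Pi.one_apply, one_mul] at hid
  exact hid

lemma StatGauss.integral_mul_eq_spectralCov (hX : StatGauss P X)
    (hν : SpectralDecomp P X ν νd f) (j k j' k' : ℤ) :
    ∫ ω, X j k ω * X j' k' ω ∂P = spectralCov ν (j - j') (k - k') := by
  have := hν.finite
  have hint : Integrable (fun q : ℝ × ℝ => Complex.exp
      (Complex.I * (((j - j' : ℤ) * q.1 + (k - k' : ℤ) * q.2 : ℝ) : ℂ))) ν :=
    .of_bound (by fun_prop) 1 (.of_forall fun q => by
      rw [mul_comm, Complex.norm_exp_ofReal_mul_I])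
  have hre := congrArg Complex.re (hν.herglotz (j - j') (k - k'))
  rw [← RCLike.re_eq_complex_re, ← integral_re hint] at hre
  simp only [RCLike.re_eq_complex_re, mul_comm Complex.I, Complex.exp_ofReal_mul_I_re,
    Complex.ofReal_re] at hre
  rw [spectralCov, hre, ← hX.stat j' k']
  simp only [add_sub_cancel, mul_comm]

lemma StatGauss.measurable_window (hX : StatGauss P X) (N : ℕ) : Measurable (window X N) :=
  (WithLp.measurable_toLp 2 _).comp (measurable_pi_lambda _ fun _ => hX.meas _ _)

lemma StatGauss.integral_sq_inner_window (hX : StatGauss P X) (hν : SpectralDecomp P X ν νd f)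
    {N : ℕ} (t : EuclideanSpace ℝ (Fin N × Fin N)) :
    ∫ ω, inner ℝ (window X N ω) t ^ 2 ∂P = t ⬝ᵥ covMatrix N ν *ᵥ t := by
  have hint (a b : Fin N × Fin N) :
      Integrable (fun ω => t a * (window X N ω a * window X N ω b * t b)) P :=
    (((hX.memLp_two _ _).integrable_mul (hX.memLp_two _ _)).mul_const _).const_mul _
  have hsq (ω : Ω) : inner ℝ (window X N ω) t ^ 2 =
      ∑ a, ∑ b, t a * (window X N ω a * window X N ω b * t b) := by
    simp only [PiLp.inner_apply, RCLike.inner_apply, conj_trivial]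
    rw [sq, Finset.sum_mul_sum]
    exact Finset.sum_congr rfl fun a _ => Finset.sum_congr rfl fun b _ => by ring
  simp_rw [hsq]
  rw [integral_finsetSum _ fun a _ => integrable_finsetSum _ fun b _ => hint a b]
  simp_rw [integral_finsetSum _ fun b _ => hint _ b, integral_const_mul, integral_mul_const]
  simp only [window, hX.integral_mul_eq_spectralCov hν, add_sub_add_right_eq_sub, dotProduct,
    Matrix.mulVec, Finset.mul_sum, covMatrix]

lemma StatGauss.map_window [IsProbabilityMeasure P] (hX : StatGauss P X)
    (hν : SpectralDecomp P X ν νd f) (N : ℕ) : P.map (window X N) = fieldLaw N ν := by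
  have := hν.finite
  have hmeas := hX.measurable_window N
  let e : Fin N × Fin N ↪ ℤ × ℤ := ⟨fun p => ((p.1 : ℕ) + 1, (p.2 : ℕ) + 1), fun p p' h => by
    simpa [Prod.ext_iff, Fin.ext_iff] using h⟩
  have := Measure.isProbabilityMeasure_map (μ := P) hmeas.aemeasurable
  refine Measure.ext_of_charFun (funext fun t => ?_)
  obtain ⟨v, hv⟩ := hX.exists_map_sum_eq e t
  have hY : (fun ω => ∑ a, t a * X (e a).1 (e a).2 ω) = fun ω => inner ℝ (window X N ω) t := rfl
  rw [hY] at hv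
  have hYm : Measurable fun ω => inner ℝ (window X N ω) t := by fun_prop
  rw [charFun_fieldLaw, ← hX.integral_sq_inner_window hν, integral_sq_of_map_eq_gaussianReal hYm hv,
    charFun_apply, integral_map hmeas.aemeasurable (by fun_prop)]
  have hchar := charFun_gaussianReal (μ := 0) (v := v) 1
  rw [← hv, charFun_apply_real, integral_map hYm.aemeasurable (by fun_prop)] at hchar
  simpa [neg_div] using hchar

end Window

section Perturbation

/-- In the field with spectral measure `ν`, the characteristic function at `r` of the empirical
spectral distribution converges in mean to the constant `c`. -/
def CharFunTendsto (ν : Measure (ℝ × ℝ)) (r : ℝ) (c : ℂ) : Prop :=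
  Tendsto (fun N => ∫⁻ x, ‖symCharFun r x - c‖ₑ ∂(fieldLaw N ν)) atTop (𝓝 0)

variable {N : ℕ} (ν ρ : Measure (ℝ × ℝ)) [IsFiniteMeasure ν] [IsFiniteMeasure ρ] (r : ℝ) (c : ℂ)

lemma lintegral_enorm_symCharFun_add_sub_le (x : EuclideanSpace ℝ (Fin N × Fin N)) :
    ∫⁻ y, ‖symCharFun r (x + y) - symCharFun r x‖ₑ ∂(fieldLaw N ρ) ≤
      ENNReal.ofReal (2 * |r| * √(ρ.real Set.univ)) := by
  calc ∫⁻ y, ‖symCharFun r (x + y) - symCharFun r x‖ₑ ∂(fieldLaw N ρ)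
      ≤ ∫⁻ y, ENNReal.ofReal (2 * |r| * (N : ℝ)⁻¹) * ‖y‖ₑ ∂(fieldLaw N ρ) :=
        lintegral_mono fun y => by
          simp only [← ofReal_norm]
          rw [← ENNReal.ofReal_mul (by positivity)]
          gcongr
          simpa using norm_symCharFun_sub_le r (x + y) x
    _ ≤ ENNReal.ofReal (2 * |r| * (N : ℝ)⁻¹) * ENNReal.ofReal (N * √(ρ.real Set.univ)) := by
        rw [lintegral_const_mul _ measurable_enorm]
        gcongr
        exact lintegral_enorm_fieldLaw_le ρ
    _ ≤ ENNReal.ofReal (2 * |r| * √(ρ.real Set.univ)) := by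
        rw [← ENNReal.ofReal_mul (by positivity)]
        refine ENNReal.ofReal_le_ofReal ?_
        calc 2 * |r| * (N : ℝ)⁻¹ * (N * √(ρ.real Set.univ))
            = 2 * |r| * (((N : ℝ)⁻¹ * N) * √(ρ.real Set.univ)) := by ring
          _ ≤ 2 * |r| * (1 * √(ρ.real Set.univ)) := by
            gcongr
            exact inv_mul_le_one
          _ = 2 * |r| * √(ρ.real Set.univ) := by ring

lemma lintegral_enorm_symCharFun_add_planeWave_sub_le (w : ℝ≥0) (q : ℝ × ℝ)
    (x : EuclideanSpace ℝ (Fin N × Fin N)) :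
    ∫⁻ y, ‖symCharFun r (x + y) - symCharFun r x‖ₑ ∂(fieldLaw N (w • Measure.dirac q)) ≤
      ENNReal.ofReal (2 * |r| * √w * (√N)⁻¹) * ∫⁻ ζ, ‖ζ‖ₑ ∂(stdGaussian ℂ) := by
  have hφ : Measurable fun y => ‖symCharFun r (x + y) - symCharFun r x‖ₑ :=
    (((continuous_symCharFun r).comp (continuous_const_add x)).sub
      continuous_const).enorm.measurable
  rw [fieldLaw_smul_dirac, lintegral_map hφ (by fun_prop),
    ← lintegral_const_mul _ measurable_enorm]
  refine lintegral_mono fun ζ => ?_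
  simp only [← ofReal_norm]
  rw [← ENNReal.ofReal_mul (by positivity)]
  gcongr
  refine (norm_symCharFun_add_planeWave_sub_le r q _ x).trans_eq ?_
  rw [norm_mul, Complex.norm_real, Real.norm_of_nonneg (sqrt_nonneg _)]
  ring

lemma lintegral_enorm_symCharFun_sub_add_le :
    ∫⁻ x, ‖symCharFun r x - c‖ₑ ∂(fieldLaw N (ν + ρ)) ≤
      ∫⁻ x, ‖symCharFun r x - c‖ₑ ∂(fieldLaw N ν) +
        ENNReal.ofReal (2 * |r| * √(ρ.real Set.univ)) := by
  rw [fieldLaw_add]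
  exact lintegral_enorm_sub_conv_le (continuous_symCharFun r).stronglyMeasurable
    (lintegral_enorm_symCharFun_add_sub_le ρ r) c

lemma lintegral_enorm_symCharFun_sub_le_add :
    ∫⁻ x, ‖symCharFun r x - c‖ₑ ∂(fieldLaw N ν) ≤
      ∫⁻ x, ‖symCharFun r x - c‖ₑ ∂(fieldLaw N (ν + ρ)) +
        ENNReal.ofReal (2 * |r| * √(ρ.real Set.univ)) := by
  rw [fieldLaw_add]
  exact lintegral_enorm_sub_le_conv (continuous_symCharFun r).stronglyMeasurable
    (lintegral_enorm_symCharFun_add_sub_le ρ r) c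

variable {ν ρ r c}

lemma CharFunTendsto.norm_sub_one_le (h : CharFunTendsto ν r c) :
    ‖c - 1‖ ≤ 2 * |r| * √(ν.real Set.univ) := by
  rw [← ENNReal.ofReal_le_ofReal_iff (by positivity), ofReal_norm]
  refine ge_of_tendsto (f := fun N => ∫⁻ x, ‖symCharFun r x - c‖ₑ ∂(fieldLaw N ν) +
    ENNReal.ofReal (2 * |r| * √(ν.real Set.univ))) (x := atTop) ?_ ?_
  · simpa using h.add_const _
  · filter_upwards [eventually_ne_atTop 0] with N hN
    have : NeZero N := ⟨hN⟩
    refine (enorm_sub_le_lintegral_add (m := fieldLaw N ν) (φ := symCharFun r)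
      (continuous_symCharFun r).aestronglyMeasurable c 1).trans ?_
    gcongr
    simpa [symCharFun_zero] using lintegral_enorm_symCharFun_add_sub_le (N := N) ν r 0

lemma CharFunTendsto.add_smul_dirac (h : CharFunTendsto ν r c) (w : ℝ≥0) (q : ℝ × ℝ) :
    CharFunTendsto (ν + w • Measure.dirac q) r c := by
  have hfin : ∫⁻ ζ, ‖ζ‖ₑ ∂(stdGaussian ℂ) ≠ ∞ := IsGaussian.integrable_id.2.ne
  have hdecay : Tendsto (fun N : ℕ => ENNReal.ofReal (2 * |r| * √w * (√N)⁻¹) *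
      ∫⁻ ζ, ‖ζ‖ₑ ∂(stdGaussian ℂ)) atTop (𝓝 0) := by
    have hsqrt : Tendsto (fun N : ℕ => (√N)⁻¹) atTop (𝓝 0) :=
      (tendsto_sqrt_atTop.comp tendsto_natCast_atTop_atTop).inv_tendsto_atTop
    simpa using ENNReal.Tendsto.mul_const
      (ENNReal.tendsto_ofReal (hsqrt.const_mul (2 * |r| * √w))) (.inr hfin)
  refine tendsto_of_tendsto_of_tendsto_of_le_of_le tendsto_const_nhds
    (by simpa using h.add hdecay) (fun _ => zero_le) fun N => ?_
  simp only [fieldLaw_add]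
  exact lintegral_enorm_sub_conv_le (continuous_symCharFun r).stronglyMeasurable
    (lintegral_enorm_symCharFun_add_planeWave_sub_le r w q) c

lemma CharFunTendsto.add_restrict_finset (h : CharFunTendsto ν r c) (t : Finset (ℝ × ℝ)) :
    CharFunTendsto (ν + ρ.restrict t) r c := by
  induction t using Finset.induction_on with
  | empty => simpa using h
  | insert q t hq ih =>
    rw [Finset.coe_insert, Set.insert_eq, Measure.restrict_union (by simpa using hq)
      t.measurableSet, Measure.restrict_singleton, add_comm (ρ {q} • _), ← add_assoc,
      ← ENNReal.coe_toNNReal (measure_ne_top ρ {q})]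
    exact ih.add_smul_dirac _ q

lemma exists_tendsto_measure_compl_finset {α : Type*} [MeasurableSpace α]
    [MeasurableSingletonClass α] [Nonempty α] (μ : Measure α) [IsFiniteMeasure μ] {s : Set α}
    (hs : s.Countable) (hμ : μ sᶜ = 0) :
    ∃ t : ℕ → Finset α, Tendsto (fun n => μ (t n)ᶜ) atTop (𝓝 0) := by
  classical
  obtain ⟨g, hg⟩ := Set.countable_iff_exists_subset_range.1 hs
  refine ⟨fun n => (Finset.range n).image g, ?_⟩
  have hinter : ⋂ n, (((Finset.range n).image g : Finset α) : Set α)ᶜ ⊆ sᶜ := fun x hx hxs => by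
    obtain ⟨k, rfl⟩ := hg hxs
    exact Set.mem_iInter.1 hx (k + 1)
      (Finset.mem_coe.2 (Finset.mem_image_of_mem g (Finset.self_mem_range_succ k)))
  rw [← measure_mono_null hinter hμ]
  refine tendsto_measure_iInter_atTop (fun n => (Finset.measurableSet _).compl.nullMeasurableSet)
    (fun m n hmn => ?_) ⟨0, measure_ne_top μ _⟩
  dsimp only
  gcongr

lemma CharFunTendsto.add_of_countable (h : CharFunTendsto ν r c) {s : Set (ℝ × ℝ)}
    (hs : s.Countable) (hρ : ρ sᶜ = 0) : CharFunTendsto (ν + ρ) r c := by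
  obtain ⟨t, ht⟩ := exists_tendsto_measure_compl_finset ρ hs hρ
  have htail : Tendsto (fun n => 0 + ENNReal.ofReal
      (2 * |r| * √((ρ.restrict (t n : Set (ℝ × ℝ))ᶜ).real Set.univ))) atTop (𝓝 0) := by
    simp only [Measure.real, Measure.restrict_apply_univ]
    simpa using ENNReal.tendsto_ofReal
      (((ENNReal.tendsto_toReal ENNReal.zero_ne_top).comp ht).sqrt.const_mul (2 * |r|))
  refine ENNReal.tendsto_nhds_zero.2 fun ε hε => ?_
  obtain ⟨n, hn⟩ := (htail.eventually_lt_const hε).exists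
  filter_upwards [((h.add_restrict_finset (ρ := ρ) (t n)).add_const _).eventually_lt_const hn]
    with N hN
  rw [← Measure.restrict_add_restrict_compl (μ := ρ) (t n).measurableSet, ← add_assoc]
  exact (lintegral_enorm_symCharFun_sub_add_le _ _ r c).trans hN.le

end Perturbation

section ShiftCovariance

variable {R S ι : Type*} [CommRing R] [CommRing S] {N : ℕ}

variable (R N) in
/-- The truncation of the shift by `a` on `ℤ` to an `N × N` matrix. -/
def truncShift (a : ℤ) : Matrix (Fin N) (Fin N) R := fun i j => if (j : ℤ) - i = a then 1 else 0

lemma transpose_truncShift (a : ℤ) : (truncShift R N a)ᵀ = truncShift R N (-a) := by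
  ext i j
  simp only [truncShift, Matrix.transpose_apply]
  congr 1
  exact propext ⟨fun _ => by lia, fun _ => by lia⟩

lemma map_truncShift (f : R →+* S) (a : ℤ) : (truncShift R N a).map f = truncShift S N a := by
  ext i j
  simp [truncShift, apply_ite f]

variable [Fintype ι] {H : ι → Matrix (Fin N) (Fin N) R} {F : Finset (ℤ × ℤ)} {c : ℤ × ℤ → R}

/-- The random matrix `∑ i, ξ i • H i` with standard Gaussian `ξ` has the covariance of a
symmetrized stationary field: `c q` is the contribution of the lag `q`, and the two terms are the
two ways of matching the indices of two symmetric entries. -/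
def HasShiftCovariance (H : ι → Matrix (Fin N) (Fin N) R) (F : Finset (ℤ × ℤ)) (c : ℤ × ℤ → R) :
    Prop :=
  ∀ j k l m, ∑ i, H i j k * H i l m = ∑ q ∈ F, c q *
    (truncShift R N q.1 j l * truncShift R N q.2 k m +
      truncShift R N q.1 j m * truncShift R N q.2 k l)

namespace HasShiftCovariance

lemma map (h : HasShiftCovariance H F c) (f : R →+* S) :
    HasShiftCovariance (fun i => (H i).map f) F (f ∘ c) := fun j k l m => by
  simp only [Matrix.map_apply, ← map_mul, ← map_sum, h j k l m]
  simp only [map_sum, map_mul, map_add, ← map_truncShift f, Matrix.map_apply, Function.comp_apply]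

lemma sum_sum_mul {κ : Type*} [Fintype κ] (h : HasShiftCovariance H F c) (w : κ → R)
    (j k l m : κ → Fin N) :
    ∑ i, ∑ x, w x * (H i (j x) (k x) * H i (l x) (m x)) = ∑ q ∈ F, c q *
      (∑ x, w x * (truncShift R N q.1 (j x) (l x) * truncShift R N q.2 (k x) (m x)) +
        ∑ x, w x * (truncShift R N q.1 (j x) (m x) * truncShift R N q.2 (k x) (l x))) := by
  rw [Finset.sum_comm]
  simp only [← Finset.mul_sum, h _ _ _ _, ← Finset.sum_add_distrib, ← mul_add]
  simp only [Finset.mul_sum]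
  rw [Finset.sum_comm]
  exact Finset.sum_congr rfl fun q _ => Finset.sum_congr rfl fun x _ => mul_left_comm _ _ _

lemma sum_mul_mul (h : HasShiftCovariance H F c) (M : Matrix (Fin N) (Fin N) R) :
    ∑ i, H i * M * H i = ∑ q ∈ F, c q • (truncShift R N q.1 * Mᵀ * truncShift R N q.2 +
      (M * truncShift R N (-q.2)).trace • truncShift R N q.1) := by
  ext j m
  convert h.sum_sum_mul (fun x : Fin N × Fin N => M x.1 x.2) (fun _ => j) Prod.fst Prod.snd
    (fun _ => m) using 1
  · simp only [Matrix.sum_apply, Matrix.mul_apply, Finset.sum_mul, Fintype.sum_prod_type_right]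
    exact Finset.sum_congr rfl fun i _ => Finset.sum_congr rfl fun l _ =>
      Finset.sum_congr rfl fun k _ => by ring
  · simp only [Matrix.sum_apply, Matrix.smul_apply, Matrix.add_apply, Matrix.mul_apply,
      Matrix.trace, Matrix.diag, ← transpose_truncShift, Matrix.transpose_apply, smul_eq_mul,
      Finset.sum_mul, Fintype.sum_prod_type]
    congr! 5 <;> ring

lemma sum_trace_smul (h : HasShiftCovariance H F c) (M : Matrix (Fin N) (Fin N) R) :
    ∑ i, (H i * M).trace • H i = ∑ q ∈ F, c q •
      (truncShift R N (-q.1) * Mᵀ * truncShift R N q.2 +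
        truncShift R N (-q.2) * M * truncShift R N q.1) := by
  ext l m
  convert h.sum_sum_mul (fun x : Fin N × Fin N => M x.2 x.1) Prod.fst Prod.snd (fun _ => l)
    (fun _ => m) using 1
  · simp only [Matrix.sum_apply, Matrix.mul_apply, Matrix.trace, Matrix.diag, Matrix.smul_apply,
      smul_eq_mul, Finset.sum_mul, Fintype.sum_prod_type]
    congr! 3
    ring
  · simp only [Matrix.sum_apply, Matrix.smul_apply, Matrix.add_apply, Matrix.mul_apply,
      ← transpose_truncShift, Matrix.transpose_apply, smul_eq_mul, Finset.sum_mul]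
    congr! 3
    · rw [Fintype.sum_prod_type_right]
      congr! 2
      ring
    · rw [Fintype.sum_prod_type]
      congr! 2
      ring

end HasShiftCovariance

end ShiftCovariance

section MatrixWords

variable {R : Type*} [CommRing R] {N : ℕ} {A : Matrix (Fin N) (Fin N) R}

/-- A noncommutative monomial in a random matrix, denoted `none`, and truncated shifts, where
`some a` denotes the shift by `a`. Its degree in the random matrix is `List.count none`. -/
abbrev Word : Type := List (Option ℤ)

namespace Word

/-- The value of a word when `A` is substituted for the random matrix. -/
def eval (A : Matrix (Fin N) (Fin N) R) (w : Word) : Matrix (Fin N) (Fin N) R :=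
  (w.map fun l => l.elim A (truncShift R N)).prod

/-- The word whose value is the transpose of that of `w` when `A` is symmetric. -/
def transpose (w : Word) : Word := (w.map (Option.map Neg.neg)).reverse

/-- The ways of splitting a word at an occurrence of the random matrix, which is removed. -/
def splits : Word → Multiset (Word × Word)
  | [] => 0
  | none :: w => ([], w) ::ₘ (splits w).map fun p => (none :: p.1, p.2)
  | some a :: w => (splits w).map fun p => (some a :: p.1, p.2)

/-- The ways of removing an occurrence of the random matrix from a family of words; the word it is
removed from is cut open cyclically and comes first. -/
def cuts : List Word → Multiset (Word × List Word)
  | [] => 0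
  | w :: ws => (splits w).map (fun p => (p.2 ++ p.1, ws)) +
      (cuts ws).map fun q => (q.1, w :: q.2)

lemma count_transpose (w : Word) : (transpose w).count none = w.count none := by
  induction w with
  | nil => rfl
  | cons l w ih => cases l <;> simpa [transpose] using ih

lemma count_of_mem_splits {w : Word} {p : Word × Word} (hp : p ∈ splits w) :
    p.1.count none + p.2.count none + 1 = w.count none := by
  induction w generalizing p with
  | nil => simp [splits] at hp
  | cons l w ih =>
    cases l <;> simp only [splits, Multiset.mem_cons, Multiset.mem_map] at hp
    · obtain rfl | ⟨q, hq, rfl⟩ := hp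
      · simp
      · have := ih hq
        grind
    · obtain ⟨q, hq, rfl⟩ := hp
      simpa using ih hq

lemma card_splits (w : Word) : (splits w).card = w.count none := by
  induction w with
  | nil => rfl
  | cons l w ih => cases l <;> simp [splits, ih]

lemma count_of_mem_cuts {ws : List Word} {q : Word × List Word} (hq : q ∈ cuts ws) :
    q.1.count none + q.2.flatten.count none + 1 = ws.flatten.count none := by
  induction ws generalizing q with
  | nil => simp [cuts] at hq
  | cons w ws ih =>
    simp only [cuts, Multiset.mem_add, Multiset.mem_map] at hq
    obtain ⟨p, hp, rfl⟩ | ⟨r, hr, rfl⟩ := hq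
    · have := count_of_mem_splits hp
      grind
    · have := ih hr
      grind

lemma card_cuts (ws : List Word) : (cuts ws).card = ws.flatten.count none := by
  induction ws with
  | nil => rfl
  | cons w ws ih => simp [cuts, ih, card_splits]

lemma eval_cons (l : Option ℤ) (w : Word) :
    eval A (l :: w) = l.elim A (truncShift R N) * eval A w := by
  simp [eval]

lemma eval_append (v w : Word) : eval A (v ++ w) = eval A v * eval A w := by
  simp [eval]

lemma eval_transpose (hA : A.IsSymm) (w : Word) : eval A (transpose w) = (eval A w)ᵀ := by
  induction w with
  | nil => simp [eval, transpose]
  | cons l w ih =>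
    have htranspose : transpose (l :: w) = transpose w ++ [l.map Neg.neg] := by simp [transpose]
    rw [htranspose, eval_append, ih, eval_cons (w := w), Matrix.transpose_mul]
    cases l <;> simp [eval, hA.eq, transpose_truncShift]

end Word

variable [Algebra ℝ R]

variable (R N) in
/-- The normalized trace `M ↦ N⁻¹ tr M`. -/
def normTrace : Matrix (Fin N) (Fin N) R →ₗ[ℝ] R :=
  (N : ℝ)⁻¹ • Matrix.traceLinearMap (Fin N) ℝ R

lemma normTrace_apply (M : Matrix (Fin N) (Fin N) R) : normTrace R N M = (N : ℝ)⁻¹ • M.trace := rfl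

lemma normTrace_mul_comm (M M' : Matrix (Fin N) (Fin N) R) :
    normTrace R N (M * M') = normTrace R N (M' * M) := by
  rw [normTrace_apply, Matrix.trace_mul_comm, normTrace_apply]

/-- The product of the normalized traces of the values of a family of words. -/
def traceProd (A : Matrix (Fin N) (Fin N) R) (ws : List Word) : R :=
  (ws.map fun w => normTrace R N (w.eval A)).prod

lemma traceProd_cons (w : Word) (ws : List Word) :
    traceProd A (w :: ws) = normTrace R N (w.eval A) * traceProd A ws := by
  simp [traceProd]

lemma traceProd_append_comm (v w : Word) (ws : List Word) :
    traceProd A ((v ++ w) :: ws) = traceProd A ((w ++ v) :: ws) := by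
  simp only [traceProd_cons, Word.eval_append, normTrace_mul_comm]

section Derivation

variable (D : Derivation ℝ R R)

lemma map_derivation_mul (M M' : Matrix (Fin N) (Fin N) R) :
    (M * M').map D = M.map D * M' + M * M'.map D := by
  ext j k
  simp only [Matrix.map_apply, Matrix.mul_apply, Matrix.add_apply, map_sum, Derivation.leibniz,
    smul_eq_mul, Finset.sum_add_distrib, mul_comm (M' _ k), add_comm]

lemma map_derivation_truncShift (a : ℤ) : (truncShift R N a).map D = 0 := by
  ext j k
  simp [truncShift, apply_ite D]

lemma map_derivation_eval (w : Word) :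
    (w.eval A).map D = (w.splits.map fun p => p.1.eval A * A.map D * p.2.eval A).sum := by
  induction w with
  | nil =>
    ext j k
    simp [Word.eval, Word.splits, Matrix.one_apply, apply_ite D]
  | cons l w ih =>
    rw [Word.eval_cons, map_derivation_mul, ih]
    cases l <;> simp [Word.splits, map_derivation_truncShift,
      ← Multiset.sum_map_mul_left, mul_assoc, Word.eval]

lemma derivation_normTrace (M : Matrix (Fin N) (Fin N) R) :
    D (normTrace R N M) = normTrace R N (M.map D) := by
  simp [normTrace_apply, Matrix.trace]

lemma derivation_traceProd (ws : List Word) :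
    D (traceProd A ws) = ((Word.cuts ws).map fun q =>
      normTrace R N (A.map D * q.1.eval A) * traceProd A q.2).sum := by
  induction ws with
  | nil => simp [traceProd, Word.cuts]
  | cons w ws ih =>
    have hcut (p : Word × Word) : normTrace R N (p.1.eval A * A.map D * p.2.eval A) =
        normTrace R N (A.map D * (p.2 ++ p.1).eval A) := by
      rw [Word.eval_append, mul_assoc, normTrace_mul_comm, mul_assoc]
    rw [traceProd_cons, Derivation.leibniz, ih, derivation_normTrace, map_derivation_eval,
      map_multiset_sum, add_comm]
    simp [Word.cuts, traceProd_cons, ← Multiset.sum_map_mul_left, mul_left_comm,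
      hcut, mul_comm (traceProd A ws), Multiset.sum_map_mul_right]

end Derivation

end MatrixWords

lemma abs_sum_mul_le {κ : Type*} {F : Finset κ} {s e : κ → ℝ} {B : ℝ}
    (he : ∀ q ∈ F, |e q| ≤ B) : |∑ q ∈ F, s q * e q| ≤ (∑ q ∈ F, |s q|) * B := by
  refine (Finset.abs_sum_le_sum_abs _ _).trans ?_
  rw [Finset.sum_mul]
  gcongr with q hq
  rw [abs_mul]
  gcongr
  exact he q hq

lemma abs_multiset_sum_map_le {α : Type*} {m : Multiset α} {e : α → ℝ} {B : ℝ}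
    (he : ∀ a ∈ m, |e a| ≤ B) : |(m.map e).sum| ≤ m.card * B := by
  refine Multiset.abs_sum_le_sum_abs.trans ?_
  simpa using Multiset.sum_le_card_nsmul ((m.map e).map abs) B (by simpa using he)

section LoopEquation

open MvPolynomial

variable {ι : Type*} [Fintype ι] {N : ℕ} {H : ι → Matrix (Fin N) (Fin N) ℝ}

/-- The matrix `∑ i, X i • H i`, with one indeterminate for each coefficient. -/
def genericMatrix (H : ι → Matrix (Fin N) (Fin N) ℝ) :
    Matrix (Fin N) (Fin N) (MvPolynomial ι ℝ) :=
  ∑ i, (X i : MvPolynomial ι ℝ) • (H i).map C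

lemma isSymm_genericMatrix (hsymm : ∀ i, (H i).IsSymm) : (genericMatrix H).IsSymm := by
  simp [Matrix.IsSymm, genericMatrix, Matrix.transpose_sum, ← Matrix.transpose_map, (hsymm _).eq]

lemma map_pderiv_genericMatrix (i : ι) : (genericMatrix H).map (pderiv i) = (H i).map C := by
  classical
  ext1 j k
  simp [genericMatrix, Matrix.sum_apply, pderiv_X, Pi.single_apply]

/-- A linear functional on polynomials satisfying the Gaussian integration by parts formula, such as
the expectation with respect to independent standard Gaussian variables. -/
structure IsGaussianFunctional (E : MvPolynomial ι ℝ →ₗ[ℝ] ℝ) : Prop where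
  map_one : E 1 = 1
  map_X_mul : ∀ i p, E (X i * p) = E (pderiv i p)

lemma normTrace_genericMatrix_mul (M : Matrix (Fin N) (Fin N) (MvPolynomial ι ℝ)) :
    normTrace _ N (genericMatrix H * M) = ∑ i, X i * normTrace _ N ((H i).map C * M) := by
  simp [genericMatrix, normTrace_apply, Matrix.sum_mul]

variable {F : Finset (ℤ × ℤ)} {s : ℤ × ℤ → ℝ}

lemma sum_normTrace_mul_mul_mul (hH : HasShiftCovariance H F fun q => (N : ℝ)⁻¹ * s q)
    (M M' : Matrix (Fin N) (Fin N) (MvPolynomial ι ℝ)) :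
    ∑ i, normTrace _ N ((H i).map C * M * (H i).map C * M') = ∑ q ∈ F, s q •
      (normTrace _ N (truncShift _ N q.1 * M') * normTrace _ N (M * truncShift _ N (-q.2)) +
        (N : ℝ)⁻¹ • normTrace _ N (truncShift _ N q.1 * Mᵀ * truncShift _ N q.2 * M')) := by
  rw [← map_sum, ← Matrix.sum_mul, (hH.map C).sum_mul_mul]
  simp only [Matrix.sum_mul, map_sum, Function.comp_apply, Matrix.smul_mul, Matrix.add_mul,
    normTrace_apply, Matrix.trace_smul, Matrix.trace_add, MvPolynomial.smul_eq_C_mul, smul_eq_mul,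
    C_mul]
  refine Finset.sum_congr rfl fun q _ => ?_
  ring

lemma sum_normTrace_mul_normTrace (hH : HasShiftCovariance H F fun q => (N : ℝ)⁻¹ * s q)
    (M M' : Matrix (Fin N) (Fin N) (MvPolynomial ι ℝ)) :
    ∑ i, normTrace _ N ((H i).map C * M) * normTrace _ N ((H i).map C * M') = ∑ q ∈ F, s q •
      ((N : ℝ)⁻¹ ^ 2 • (normTrace _ N (truncShift _ N (-q.1) * Mᵀ * truncShift _ N q.2 * M') +
        normTrace _ N (truncShift _ N (-q.2) * M * truncShift _ N q.1 * M'))) := by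
  calc _ = C ((N : ℝ)⁻¹) * normTrace _ N ((∑ i, ((H i).map C * M).trace • (H i).map C) * M') := by
        simp [Matrix.sum_mul, normTrace_apply, MvPolynomial.smul_eq_C_mul, mul_assoc,
          Finset.mul_sum]
        ring_nf
    _ = _ := by
        rw [(hH.map C).sum_trace_smul]
        simp only [Matrix.sum_mul, map_sum, Function.comp_apply, Matrix.smul_mul, Matrix.add_mul,
          normTrace_apply, Matrix.trace_smul, Matrix.trace_add, MvPolynomial.smul_eq_C_mul,
          smul_eq_mul, C_mul, C_pow, Finset.mul_sum]
        refine Finset.sum_congr rfl fun q _ => ?_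
        ring

namespace IsGaussianFunctional

variable {E : MvPolynomial ι ℝ →ₗ[ℝ] ℝ}

lemma map_traceProd_none_cons (hE : IsGaussianFunctional E) (w : Word) (ws : List Word) :
    E (traceProd (genericMatrix H) ((none :: w) :: ws)) =
      (w.splits.map fun p => E ((∑ i, normTrace _ N ((H i).map C * p.1.eval (genericMatrix H) *
        (H i).map C * p.2.eval (genericMatrix H))) * traceProd (genericMatrix H) ws)).sum +
      ((Word.cuts ws).map fun q => E ((∑ i, normTrace _ N ((H i).map C * w.eval (genericMatrix H)) *
        normTrace _ N ((H i).map C * q.1.eval (genericMatrix H))) *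
          traceProd (genericMatrix H) q.2)).sum := by
  have hpderiv (i : ι) : pderiv i (normTrace _ N ((H i).map C * w.eval (genericMatrix H))) =
      (w.splits.map fun p => normTrace _ N ((H i).map C * p.1.eval (genericMatrix H) *
        (H i).map C * p.2.eval (genericMatrix H))).sum := by
    have hzero : ((H i).map (C : ℝ →+* MvPolynomial ι ℝ)).map (pderiv i) = 0 := by
      ext1
      simp
    rw [derivation_normTrace, map_derivation_mul, hzero, map_derivation_eval,
      map_pderiv_genericMatrix, zero_mul, zero_add, ← Multiset.sum_map_mul_left, map_multiset_sum]
    simp [mul_assoc]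
  rw [traceProd_cons, Word.eval_cons, Option.elim_none, normTrace_genericMatrix_mul,
    Finset.sum_mul, map_sum]
  simp only [mul_assoc (X _), hE.map_X_mul, Derivation.leibniz, hpderiv, derivation_traceProd,
    map_pderiv_genericMatrix]
  simp only [smul_eq_mul, map_add, Finset.sum_add_distrib, Finset.sum_mul, map_sum,
    Multiset.sum_map_sum, ← Multiset.sum_map_mul_left, ← Multiset.sum_map_mul_right,
    map_multiset_sum, Multiset.map_map, Function.comp_apply, mul_comm (traceProd _ ws), mul_assoc]
  rw [add_comm]

/-- The leading term of the loop equation for `none :: w` and `ws` coming from a splitting of `w`;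
the remaining terms are of order `N⁻¹`. -/
def splitTerm (E : MvPolynomial ι ℝ →ₗ[ℝ] ℝ) (H : ι → Matrix (Fin N) (Fin N) ℝ)
    (F : Finset (ℤ × ℤ)) (s : ℤ × ℤ → ℝ) (ws : List Word) (p : Word × Word) : ℝ :=
  ∑ q ∈ F, s q *
    E (traceProd (genericMatrix H) ((some q.1 :: p.2) :: (p.1 ++ [some (-q.2)]) :: ws))

lemma map_sum_normTrace_mul_traceProd (hsymm : ∀ i, (H i).IsSymm)
    (hH : HasShiftCovariance H F fun q => (N : ℝ)⁻¹ * s q) (p : Word × Word) (ws : List Word) :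
    E ((∑ i, normTrace _ N ((H i).map C * p.1.eval (genericMatrix H) *
      (H i).map C * p.2.eval (genericMatrix H))) * traceProd (genericMatrix H) ws) =
    splitTerm E H F s ws p + (N : ℝ)⁻¹ * ∑ q ∈ F, s q * E (traceProd (genericMatrix H)
      ((some q.1 :: (p.1.transpose ++ some q.2 :: p.2)) :: ws)) := by
  rw [sum_normTrace_mul_mul_mul hH, splitTerm, Finset.mul_sum, ← Finset.sum_add_distrib,
    Finset.sum_mul, map_sum]
  refine Finset.sum_congr rfl fun q _ => ?_
  simp only [traceProd_cons, Word.eval_cons, Word.eval_append, Option.elim_some,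
    Word.eval_transpose (isSymm_genericMatrix hsymm), smul_mul_assoc, add_mul, map_smul, map_add,
    smul_eq_mul, mul_assoc]
  simp [Word.eval]
  ring

lemma map_sum_normTrace_mul_normTrace (hsymm : ∀ i, (H i).IsSymm)
    (hH : HasShiftCovariance H F fun q => (N : ℝ)⁻¹ * s q) (v w : Word) (ws : List Word) :
    E ((∑ i, normTrace _ N ((H i).map C * v.eval (genericMatrix H)) *
      normTrace _ N ((H i).map C * w.eval (genericMatrix H))) * traceProd (genericMatrix H) ws) =
    (N : ℝ)⁻¹ ^ 2 * ∑ q ∈ F, s q * (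
      E (traceProd (genericMatrix H) ((some (-q.1) :: (v.transpose ++ some q.2 :: w)) :: ws)) +
      E (traceProd (genericMatrix H) ((some (-q.2) :: (v ++ some q.1 :: w)) :: ws))) := by
  rw [sum_normTrace_mul_normTrace hH, Finset.mul_sum, Finset.sum_mul, map_sum]
  refine Finset.sum_congr rfl fun q _ => ?_
  simp only [traceProd_cons, Word.eval_cons, Word.eval_append, Option.elim_some,
    Word.eval_transpose (isSymm_genericMatrix hsymm), smul_mul_assoc, add_mul, map_smul, map_add,
    smul_eq_mul, mul_assoc]
  ring

lemma abs_map_traceProd_none_cons_sub_le (hE : IsGaussianFunctional E)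
    (hsymm : ∀ i, (H i).IsSymm) (hH : HasShiftCovariance H F fun q => (N : ℝ)⁻¹ * s q)
    {w : Word} {ws : List Word} {B : ℝ}
    (hB : ∀ ws' : List Word, ws'.flatten.count none + 1 = (w :: ws).flatten.count none →
      |E (traceProd (genericMatrix H) ws')| ≤ B) :
    |E (traceProd (genericMatrix H) ((none :: w) :: ws)) -
      (w.splits.map (splitTerm E H F s ws)).sum| ≤
    (N : ℝ)⁻¹ * ((w.count none + 2 * ws.flatten.count none) * ((∑ q ∈ F, |s q|) * B)) := by
  have hsplit : ∀ p ∈ w.splits, |(N : ℝ)⁻¹ * ∑ q ∈ F, s q * E (traceProd (genericMatrix H)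
      ((some q.1 :: (p.1.transpose ++ some q.2 :: p.2)) :: ws))| ≤
      (N : ℝ)⁻¹ * ((∑ q ∈ F, |s q|) * B) := fun p hp => by
    rw [abs_mul, abs_of_nonneg (by positivity)]
    gcongr
    refine abs_sum_mul_le fun q _ => hB _ ?_
    have := Word.count_of_mem_splits hp
    have := Word.count_transpose p.1
    grind
  have hcut : ∀ r ∈ Word.cuts ws, |(N : ℝ)⁻¹ ^ 2 * ∑ q ∈ F, s q * (
      E (traceProd (genericMatrix H)
        ((some (-q.1) :: (w.transpose ++ some q.2 :: r.1)) :: r.2)) +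
      E (traceProd (genericMatrix H) ((some (-q.2) :: (w ++ some q.1 :: r.1)) :: r.2)))| ≤
      (N : ℝ)⁻¹ * ((∑ q ∈ F, |s q|) * (B + B)) := fun r hr => by
    rw [abs_mul, abs_of_nonneg (by positivity), sq]
    have := Word.count_of_mem_cuts hr
    have := Word.count_transpose w
    gcongr
    · exact mul_le_of_le_one_left (by positivity) N.cast_inv_le_one
    · exact abs_sum_mul_le fun q _ => (abs_add_le _ _).trans
        (add_le_add (hB _ (by grind)) (hB _ (by grind)))
  rw [hE.map_traceProd_none_cons]
  simp only [map_sum_normTrace_mul_traceProd hsymm hH, map_sum_normTrace_mul_normTrace hsymm hH,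
    Multiset.sum_map_add, add_assoc, add_sub_cancel_left]
  refine (abs_add_le _ _).trans ((add_le_add (abs_multiset_sum_map_le hsplit)
    (abs_multiset_sum_map_le hcut)).trans_eq ?_)
  rw [Word.card_splits, Word.card_cuts]
  ring

end IsGaussianFunctional

end LoopEquation

section ShiftWords

variable {N : ℕ}

lemma truncShift_mul_apply_of_sub_eq {a : ℤ} {i k : Fin N} (h : (k : ℤ) - i = a)
    (M : Matrix (Fin N) (Fin N) ℝ) (j : Fin N) : (truncShift ℝ N a * M) i j = M k j := by
  rw [Matrix.mul_apply, Finset.sum_eq_single k _ (by simp)]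
  · simp [truncShift, h]
  · intro b _ hb
    rw [truncShift, if_neg fun hb' => hb (Fin.ext (by lia)), zero_mul]

lemma truncShift_mul_apply_of_forall_ne {a : ℤ} {i : Fin N} (h : ∀ k : Fin N, (k : ℤ) - i ≠ a)
    (M : Matrix (Fin N) (Fin N) ℝ) (j : Fin N) : (truncShift ℝ N a * M) i j = 0 := by
  simp [Matrix.mul_apply, truncShift, h]

lemma prod_truncShift_apply_mem_Icc (v : List ℤ) (i j : Fin N) :
    (v.map (truncShift ℝ N)).prod i j ∈ Set.Icc
      (if (j : ℤ) - i = v.sum ∧ (v.map abs).sum ≤ i ∧ i + (v.map abs).sum < N then 1 else 0 : ℝ)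
      (if (j : ℤ) - i = v.sum then 1 else 0) := by
  induction v generalizing i with
  | nil =>
    have := i.isLt
    simp only [List.map_nil, List.prod_nil, List.sum_nil, Matrix.one_apply]
    grind
  | cons a v ih =>
    have hv : 0 ≤ (v.map abs).sum := List.sum_nonneg (by simp)
    simp only [List.map_cons, List.prod_cons, List.sum_cons]
    by_cases h : ∃ k : Fin N, (k : ℤ) - i = a
    · obtain ⟨k, hk⟩ := h
      rw [truncShift_mul_apply_of_sub_eq hk]
      refine Set.Icc_subset_Icc ?_ ?_ (ih k)
      · grind
      · grind
    · push Not at h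
      rw [truncShift_mul_apply_of_forall_ne h]
      refine ⟨(if_neg fun hi => h ⟨(i + a).toNat, ?_⟩ ?_).le, ?_⟩
      · grind
      · grind
      · positivity

lemma normTrace_prod_truncShift_mem_Icc (v : List ℤ) :
    normTrace ℝ N (v.map (truncShift ℝ N)).prod ∈ Set.Icc 0 1 := by
  have hdiag (i : Fin N) : (v.map (truncShift ℝ N)).prod i i ∈ Set.Icc (0 : ℝ) 1 := by
    refine Set.Icc_subset_Icc ?_ ?_ (prod_truncShift_apply_mem_Icc v i i) <;> split_ifs <;> simp
  simp only [normTrace_apply, Matrix.trace, Matrix.diag, smul_eq_mul]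
  refine ⟨mul_nonneg (by positivity) (Finset.sum_nonneg fun i _ => (hdiag i).1), ?_⟩
  calc _ ≤ (N : ℝ)⁻¹ * ∑ _i : Fin N, 1 := by
        gcongr with i
        exact (hdiag i).2
    _ ≤ 1 := by simpa using inv_mul_le_one

lemma le_normTrace_prod_truncShift [NeZero N] {v : List ℤ} (hv : v.sum = 0) :
    1 - (N : ℝ)⁻¹ * (2 * (v.map abs).sum) ≤ normTrace ℝ N (v.map (truncShift ℝ N)).prod := by
  have hpos : 0 ≤ (v.map abs).sum := List.sum_nonneg (by simp)
  obtain ⟨b, hb⟩ := Int.eq_ofNat_of_zero_le hpos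
  have hcard : ((Finset.Ico b (N - b)).card : ℝ) ≤ ∑ i : Fin N,
      if b ≤ i.1 ∧ i.1 + b < N then 1 else 0 := by
    rw [Finset.sum_boole, ← Finset.card_attachFin (n := N) _ (by grind)]
    exact mod_cast Finset.card_le_card fun i => by grind [Finset.mem_attachFin]
  calc 1 - (N : ℝ)⁻¹ * (2 * (v.map abs).sum) = (N : ℝ)⁻¹ * (N - b - b) := by
        rw [hb, sub_sub, mul_sub, inv_mul_cancel₀ (NeZero.ne _), Int.cast_natCast, two_mul]
    _ ≤ (N : ℝ)⁻¹ * ∑ i : Fin N, if b ≤ i.1 ∧ i.1 + b < N then 1 else 0 := by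
        gcongr
        refine le_trans ?_ hcard
        rw [Nat.card_Ico, sub_sub, sub_le_iff_le_add]
        exact mod_cast (by lia)
    _ ≤ (N : ℝ)⁻¹ * ∑ i, (v.map (truncShift ℝ N)).prod i i := by
        gcongr with i
        refine le_trans (le_of_eq ?_) (prod_truncShift_apply_mem_Icc v i i).1
        grind
    _ = _ := rfl

lemma exists_tendsto_normTrace_prod_truncShift (v : List ℤ) :
    ∃ l, Tendsto (fun N => normTrace ℝ N (v.map (truncShift ℝ N)).prod) atTop (𝓝 l) := by
  by_cases hv : v.sum = 0
  · refine ⟨1, tendsto_of_tendsto_of_tendsto_of_le_of_le'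
      (g := fun N : ℕ => 1 - (N : ℝ)⁻¹ * (2 * (v.map abs).sum)) ?_ tendsto_const_nhds
      ((eventually_ne_atTop 0).mono fun N hN => ?_)
      (.of_forall fun N => (normTrace_prod_truncShift_mem_Icc v).2)⟩
    · simpa using (tendsto_inv_atTop_nhds_zero_nat.mul_const _).const_sub (1 : ℝ)
    · have : NeZero N := ⟨hN⟩
      exact le_normTrace_prod_truncShift hv
  · refine ⟨0, tendsto_const_nhds.congr fun N => ?_⟩
    have hdiag (i : Fin N) : (v.map (truncShift ℝ N)).prod i i = 0 := by
      have h := prod_truncShift_apply_mem_Icc v i i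
      simpa [Ne.symm hv] using h
    simp [normTrace_apply, Matrix.trace, hdiag]

end ShiftWords

section WordMoments

open MvPolynomial

lemma Word.eq_map_some_or_eq_append (w : Word) :
    (∃ v : List ℤ, w = v.map some) ∨ ∃ u v : Word, w = u ++ none :: v := by
  by_cases hw : none ∈ w
  · exact .inr (List.append_of_mem hw)
  · refine .inl ⟨w.map fun l => l.getD 0, ?_⟩
    rw [List.map_map]
    refine (List.map_id'' (fun _ => rfl) w).symm.trans (List.map_congr_left fun l hl => ?_)
    cases l <;> simp_all

lemma traceProd_map_some_cons {R : Type*} [CommRing R] [Algebra ℝ R] {N : ℕ}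
    (A : Matrix (Fin N) (Fin N) R) (v : List ℤ) (ws : List Word) :
    traceProd A (v.map some :: ws) =
      normTrace ℝ N (v.map (truncShift ℝ N)).prod • traceProd A ws := by
  have heval : Word.eval A (v.map some) =
      (algebraMap ℝ R).mapMatrix (v.map (truncShift ℝ N)).prod := by
    simp [Word.eval, map_list_prod, map_truncShift, Function.comp_def]
  rw [traceProd_cons, heval, normTrace_apply, normTrace_apply, Algebra.smul_def, Algebra.smul_def,
    RingHom.mapMatrix_apply, ← AddMonoidHom.map_trace (algebraMap ℝ R), smul_eq_mul, map_mul]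

lemma traceProd_replicate {R : Type*} [CommRing R] [Algebra ℝ R] {N : ℕ}
    (A : Matrix (Fin N) (Fin N) R) (k n : ℕ) :
    traceProd A (List.replicate n (List.replicate k none)) = normTrace R N (A ^ k) ^ n := by
  simp [traceProd, Word.eval]

namespace IsGaussianFunctional

section Bound

variable {ι : Type*} [Fintype ι] {N : ℕ} {H : ι → Matrix (Fin N) (Fin N) ℝ}
  {F : Finset (ℤ × ℤ)} {s : ℤ × ℤ → ℝ} {E : MvPolynomial ι ℝ →ₗ[ℝ] ℝ}

lemma abs_map_traceProd_none_cons_le (hE : IsGaussianFunctional E)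
    (hsymm : ∀ i, (H i).IsSymm) (hH : HasShiftCovariance H F fun q => (N : ℝ)⁻¹ * s q)
    {w : Word} {ws : List Word} {B : ℝ} (hB₀ : 0 ≤ B)
    (hB : ∀ ws' : List Word, ws'.flatten.count none + 1 = (w :: ws).flatten.count none →
      |E (traceProd (genericMatrix H) ws')| ≤ B) :
    |E (traceProd (genericMatrix H) ((none :: w) :: ws))| ≤
      2 * (w :: ws).flatten.count none * ((∑ q ∈ F, |s q|) * B) := by
  have herror := hE.abs_map_traceProd_none_cons_sub_le hsymm hH hB
  have hmain : |(w.splits.map (splitTerm E H F s ws)).sum| ≤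
      w.count none * ((∑ q ∈ F, |s q|) * B) := by
    rw [← Word.card_splits]
    refine abs_multiset_sum_map_le fun p hp => abs_sum_mul_le fun q _ => hB _ ?_
    have := Word.count_of_mem_splits hp
    grind
  have hinv : (N : ℝ)⁻¹ * ((w.count none + 2 * ws.flatten.count none) *
      ((∑ q ∈ F, |s q|) * B)) ≤
      (w.count none + 2 * ws.flatten.count none) * ((∑ q ∈ F, |s q|) * B) :=
    mul_le_of_le_one_left (by positivity) N.cast_inv_le_one
  have hcount : ((w :: ws).flatten.count none : ℝ) = w.count none + ws.flatten.count none := by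
    simp
  rw [hcount]
  have := abs_sub_abs_le_abs_sub (E (traceProd (genericMatrix H) ((none :: w) :: ws)))
    (w.splits.map (splitTerm E H F s ws)).sum
  linarith

lemma abs_map_traceProd_le (hE : IsGaussianFunctional E) (hsymm : ∀ i, (H i).IsSymm)
    (hH : HasShiftCovariance H F fun q => (N : ℝ)⁻¹ * s q) (ws : List Word) :
    |E (traceProd (genericMatrix H) ws)| ≤
      (4 * ∑ q ∈ F, |s q|) ^ (ws.flatten.count none / 2) *
        (ws.flatten.count none / 2).factorial := by
  set S := ∑ q ∈ F, |s q|
  have : 0 ≤ S := Finset.sum_nonneg fun _ _ => abs_nonneg _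
  induction hd : ws.flatten.count none using Nat.strong_induction_on generalizing ws with
  | _ d ihd =>
  induction ws with
  | nil =>
    obtain rfl : d = 0 := by simpa using hd.symm
    simp [traceProd, hE.map_one]
  | cons w ws ihws =>
    obtain ⟨w, rfl⟩ | ⟨u, v, rfl⟩ := w.eq_map_some_or_eq_append
    · obtain ⟨h₀, h₁⟩ := normTrace_prod_truncShift_mem_Icc (N := N) w
      rw [traceProd_map_some_cons, map_smul, smul_eq_mul, abs_mul, abs_of_nonneg h₀]
      exact (mul_le_of_le_one_left (abs_nonneg _) h₁).trans (ihws (by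
        simpa [List.count_eq_zero.2, List.mem_map] using hd))
    · rw [traceProd_append_comm, List.cons_append]
      obtain _ | _ | d := d
      · simp at hd
      · refine (hE.abs_map_traceProd_none_cons_le hsymm hH le_rfl fun ws' hws' => ?_).trans ?_
        · grind
        · simp
      · have hcount : ((v ++ u) :: ws).flatten.count none = d + 1 := by grind
        refine (hE.abs_map_traceProd_none_cons_le hsymm hH
          (B := (4 * S) ^ (d / 2) * (d / 2).factorial) (by positivity)
          fun ws' hws' => ihd d (by lia) ws' (by lia)).trans ?_
        have hdiv : (d : ℝ) ≤ 2 * (d / 2 : ℕ) + 1 := by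
          exact_mod_cast (by lia : d ≤ 2 * (d / 2) + 1)
        rw [hcount, show (d + 1 + 1) / 2 = d / 2 + 1 by lia, pow_succ, Nat.factorial_succ]
        push_cast
        calc _ = 2 * (d + 1) * (S * ((4 * S) ^ (d / 2) * (d / 2).factorial)) := by ring
          _ ≤ 2 * (2 * ((d / 2 : ℕ) + 1)) * (S * ((4 * S) ^ (d / 2) * (d / 2).factorial)) := by
              gcongr
              linarith
          _ = _ := by ring

end Bound

variable {ι : ℕ → Type*} [∀ N, Fintype (ι N)] {H : ∀ N, ι N → Matrix (Fin N) (Fin N) ℝ}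
  {F : Finset (ℤ × ℤ)} {s : ℤ × ℤ → ℝ} {E : ∀ N, MvPolynomial (ι N) ℝ →ₗ[ℝ] ℝ}

lemma tendsto_map_traceProd_none_cons_sub (hE : ∀ N, IsGaussianFunctional (E N))
    (hsymm : ∀ N i, (H N i).IsSymm)
    (hH : ∀ N : ℕ, HasShiftCovariance (H N) F fun q => (N : ℝ)⁻¹ * s q)
    (w : Word) (ws : List Word) :
    Tendsto (fun N => E N (traceProd (genericMatrix (H N)) ((none :: w) :: ws)) -
      (w.splits.map (splitTerm (E N) (H N) F s ws)).sum) atTop (𝓝 0) := by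
  refine squeeze_zero_norm (fun N => (hE N).abs_map_traceProd_none_cons_sub_le (hsymm N) (hH N)
    (B := (4 * ∑ q ∈ F, |s q|) ^ (((w :: ws).flatten.count none - 1) / 2) *
      (((w :: ws).flatten.count none - 1) / 2).factorial) fun ws' hws' => ?_) ?_
  · rw [← hws', Nat.add_sub_cancel]
    exact (hE N).abs_map_traceProd_le (hsymm N) (hH N) ws'
  · simpa using (tendsto_inv_atTop_nhds_zero_nat (𝕜 := ℝ)).mul_const _

lemma exists_tendsto_map_traceProd_cons_sub (hE : ∀ N, IsGaussianFunctional (E N))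
    (hsymm : ∀ N i, (H N i).IsSymm)
    (hH : ∀ N : ℕ, HasShiftCovariance (H N) F fun q => (N : ℝ)⁻¹ * s q) (w : Word) :
    ∃ l, ∀ ws : List Word, Tendsto (fun N => E N (traceProd (genericMatrix (H N)) (w :: ws)) -
      l * E N (traceProd (genericMatrix (H N)) ws)) atTop (𝓝 0) := by
  induction hd : w.count none using Nat.strong_induction_on generalizing w with
  | _ d ih =>
  obtain ⟨w, rfl⟩ | ⟨u, v, rfl⟩ := w.eq_map_some_or_eq_append
  · obtain ⟨l, hl⟩ := exists_tendsto_normTrace_prod_truncShift w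
    refine ⟨l, fun ws => ?_⟩
    simp only [traceProd_map_some_cons, map_smul, smul_eq_mul, ← sub_mul]
    exact Tendsto.zero_mul_isBoundedUnder_le (by simpa using hl.sub_const l)
      (isBoundedUnder_of ⟨_, fun N => (hE N).abs_map_traceProd_le (hsymm N) (hH N) ws⟩)
  · have ih' (w' : Word) (hw' : w'.count none < d) := ih _ hw' w' rfl
    choose! L hL using ih'
    refine ⟨((Word.splits (v ++ u)).map fun p =>
      ∑ q ∈ F, s q * (L (some q.1 :: p.2) * L (p.1 ++ [some (-q.2)]))).sum, fun ws => ?_⟩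
    have hterm : ∀ p ∈ Word.splits (v ++ u), Tendsto (fun N => splitTerm (E N) (H N) F s ws p -
        (∑ q ∈ F, s q * (L (some q.1 :: p.2) * L (p.1 ++ [some (-q.2)]))) *
          E N (traceProd (genericMatrix (H N)) ws)) atTop (𝓝 0) := fun p hp => by
      have := Word.count_of_mem_splits hp
      have hq (q : ℤ × ℤ) := (((hL (some q.1 :: p.2) (by grind)
        ((p.1 ++ [some (-q.2)]) :: ws)).add ((hL (p.1 ++ [some (-q.2)]) (by grind) ws).const_mul
          (L (some q.1 :: p.2)))).const_mul (s q))
      refine ((tendsto_finsetSum F fun q _ => hq q).congr fun N => ?_).trans (by simp)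
      rw [splitTerm, Finset.sum_mul, ← Finset.sum_sub_distrib]
      exact Finset.sum_congr rfl fun q _ => by ring
    refine (((tendsto_map_traceProd_none_cons_sub hE hsymm hH (v ++ u) ws).add
      (tendsto_multiset_sum _ hterm)).congr fun N => ?_).trans (by simp)
    rw [Multiset.sum_map_sub, Multiset.sum_map_mul_right, traceProd_append_comm, List.cons_append]
    exact sub_add_sub_cancel _ _ _

lemma exists_tendsto_map_sq_normTrace_pow_sub (hE : ∀ N, IsGaussianFunctional (E N))
    (hsymm : ∀ N i, (H N i).IsSymm)
    (hH : ∀ N : ℕ, HasShiftCovariance (H N) F fun q => (N : ℝ)⁻¹ * s q) (k : ℕ) :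
    ∃ l, Tendsto (fun N => E N ((normTrace _ N (genericMatrix (H N) ^ k) - C l) ^ 2))
      atTop (𝓝 0) := by
  obtain ⟨l, hl⟩ := exists_tendsto_map_traceProd_cons_sub hE hsymm hH (List.replicate k none)
  have h := (hl (.replicate 1 (.replicate k none))).sub
    ((hl (.replicate 0 (.replicate k none))).const_mul l)
  simp only [← List.replicate_succ, traceProd_replicate] at h
  refine ⟨l, (h.congr fun N => ?_).trans (by simp)⟩
  have hexpand (t : MvPolynomial (ι N) ℝ) : (t - C l) ^ 2 = t ^ 2 - (2 * l) • t + l ^ 2 • 1 := by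
    simp only [smul_eq_C_mul, C_mul, C_pow]
    simp only [map_ofNat]
    ring
  rw [hexpand, map_add, map_sub, map_smul, map_smul]
  simp only [smul_eq_mul, pow_zero, zero_add, pow_one]
  ring

end IsGaussianFunctional

end WordMoments

section GaussianExpectation

lemma integrable_pow_gaussianReal (m : ℝ) (v : ℝ≥0) (n : ℕ) :
    Integrable (fun x : ℝ => x ^ n) (gaussianReal m v) := by
  rcases Nat.eq_zero_or_pos n with rfl | hn
  · simp
  · rw [← integrable_norm_iff (by fun_prop)]
    simpa using (memLp_id_gaussianReal (μ := m) (v := v) n).integrable_norm_pow hn.ne'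

lemma integrable_pow_mul_gaussianPDFReal (m : ℝ) {v : ℝ≥0} (hv : v ≠ 0) (n : ℕ) :
    Integrable fun x : ℝ => x ^ n * gaussianPDFReal m v x := by
  have h := integrable_pow_gaussianReal m v n
  rw [gaussianReal_of_var_ne_zero _ hv, integrable_withDensity_iff_integrable_smul'
    (measurable_gaussianPDF m v) (ae_of_all _ fun x => gaussianPDF_lt_top)] at h
  refine h.congr (ae_of_all _ fun x => ?_)
  simp [gaussianPDF, ENNReal.toReal_ofReal (gaussianPDFReal_nonneg _ _ _), mul_comm]

lemma hasDerivAt_gaussianPDFReal (m : ℝ) (v : ℝ≥0) (x : ℝ) :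
    HasDerivAt (gaussianPDFReal m v) (-((x - m) / v) * gaussianPDFReal m v x) x := by
  have hexponent : HasDerivAt (fun x : ℝ => -(x - m) ^ 2 / (2 * v)) (-((x - m) / v)) x := by
    refine (((((hasDerivAt_id x).sub_const m).pow 2).neg).div_const _).congr_deriv ?_
    simp [neg_div, mul_div_mul_left]
  rw [gaussianPDFReal_def]
  refine (hexponent.exp.const_mul _).congr_deriv ?_
  ring

lemma integral_pow_succ_gaussianReal (n : ℕ) :
    ∫ x, x ^ (n + 1) ∂gaussianReal 0 1 = n * ∫ x, x ^ (n - 1) ∂gaussianReal 0 1 := by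
  have hint := integrable_pow_mul_gaussianPDFReal 0 one_ne_zero
  have hparts := integral_mul_deriv_eq_deriv_mul_of_integrable
    (fun x _ => hasDerivAt_pow n x) (fun x _ => hasDerivAt_gaussianPDFReal 0 1 x)
    ((hint (n + 1)).neg.congr (ae_of_all _ fun x => by simp [pow_succ]; ring))
    (((hint (n - 1)).const_mul n).congr (ae_of_all _ fun x => by simp; ring)) (hint n)
  simp only [integral_gaussianReal_eq_integral_smul one_ne_zero, smul_eq_mul]
  rw [← integral_const_mul, ← neg_inj, ← integral_neg]
  convert hparts using 1
  · congr! 2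
    simp [pow_succ]
    ring
  · congr! 3 with x
    ring

open MvPolynomial

variable {ι : Type*} [Fintype ι]

lemma eval_monomial_eq_mul_prod {R : Type*} [CommSemiring R] (x : ι → R) (m : ι →₀ ℕ) (c : R) :
    eval x (monomial m c) = c * ∏ i, x i ^ m i := by
  rw [eval_monomial, Finsupp.prod_fintype _ _ fun _ => pow_zero _]

lemma integrable_eval_pi_gaussianReal (p : MvPolynomial ι ℝ) :
    Integrable (fun x => eval x p) (Measure.pi fun _ => gaussianReal 0 1) := by
  induction p using MvPolynomial.induction_on' with
  | monomial m c =>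
    simp only [eval_monomial_eq_mul_prod]
    exact (Integrable.fintype_prod (f := fun i x => x ^ m i)
      fun i => integrable_pow_gaussianReal 0 1 _).const_mul c
  | add p q hp hq =>
    simp only [map_add]
    exact hp.add hq

variable (ι) in
/-- The expectation of a polynomial evaluated at independent standard Gaussian variables. -/
def gaussianExpectation : MvPolynomial ι ℝ →ₗ[ℝ] ℝ where
  toFun p := ∫ x, eval x p ∂Measure.pi fun _ => gaussianReal 0 1
  map_add' p q := by
    simpa only [map_add] using
      integral_add (integrable_eval_pi_gaussianReal p) (integrable_eval_pi_gaussianReal q)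
  map_smul' c p := by
    simp only [smul_eval, RingHom.id_apply, smul_eq_mul]
    exact integral_const_mul _ _

lemma gaussianExpectation_apply (p : MvPolynomial ι ℝ) :
    gaussianExpectation ι p = ∫ x, eval x p ∂Measure.pi fun _ => gaussianReal 0 1 :=
  rfl

lemma gaussianExpectation_monomial (m : ι →₀ ℕ) (c : ℝ) :
    gaussianExpectation ι (monomial m c) = c * ∏ i, ∫ x, x ^ m i ∂gaussianReal 0 1 := by
  simp only [gaussianExpectation_apply, eval_monomial_eq_mul_prod]
  rw [integral_const_mul, integral_fintype_prod_eq_prod (f := fun i x => x ^ m i)]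

lemma isGaussianFunctional_gaussianExpectation :
    IsGaussianFunctional (gaussianExpectation ι) where
  map_one := by simp [gaussianExpectation_apply]
  map_X_mul i p := by
    classical
    induction p using MvPolynomial.induction_on' with
    | monomial m c =>
      rw [pderiv_monomial, X, monomial_mul, gaussianExpectation_monomial,
        gaussianExpectation_monomial, one_mul, mul_assoc,
        ← Finset.mul_prod_erase _ _ (Finset.mem_univ i),
        ← Finset.mul_prod_erase _ (fun j => ∫ x, x ^ ((m - Finsupp.single i 1 : ι →₀ ℕ) j)
          ∂gaussianReal 0 1) (Finset.mem_univ i), ← mul_assoc (m i : ℝ)]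
      congr 2
      · simp [add_comm 1, integral_pow_succ_gaussianReal]
      · refine Finset.prod_congr rfl fun j hj => ?_
        simp [Finsupp.single_eq_of_ne (Finset.ne_of_mem_erase hj)]
    | add p q hp hq => simp only [mul_add, map_add, hp, hq]

end GaussianExpectation

section Realization

open MvPolynomial
open scoped MatrixOrder

variable {N : ℕ} (ν : Measure (ℝ × ℝ))

open scoped Classical in
lemma sum_sqrt_mul_sqrt {ι : Type*} [Fintype ι] {S : Matrix ι ι ℝ}
    (hS : S.PosSemidef) (a b : ι) : ∑ i, CFC.sqrt S a i * CFC.sqrt S b i = S a b := by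
  have hsymm : (CFC.sqrt S)ᵀ = CFC.sqrt S :=
    (Matrix.nonneg_iff_posSemidef.1 (CFC.sqrt_nonneg S)).isHermitian
  have hsq := CFC.sqrt_mul_sqrt_self S (Matrix.nonneg_iff_posSemidef.2 hS)
  conv_rhs => rw [← hsq, Matrix.mul_apply]
  refine Finset.sum_congr rfl fun i _ => ?_
  rw [← Matrix.transpose_apply (CFC.sqrt S) b, hsymm]

variable (N) in
/-- The matrices `H a` for which `∑ a, ξ a • H a`, with standard Gaussian coefficients `ξ`, has the
law of `symMatrix` under `fieldLaw N ν`; they come from the columns of the square root of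
`covMatrix N ν`. -/
def coeffMatrix (a : Fin N × Fin N) : Matrix (Fin N) (Fin N) ℝ :=
  symMatrix (WithLp.toLp 2 fun b => CFC.sqrt (covMatrix N ν) b a)

lemma isSymm_coeffMatrix (a : Fin N × Fin N) : (coeffMatrix N ν a).IsSymm :=
  isHermitian_symMatrix _

lemma map_eval_genericMatrix_coeffMatrix (x : Fin N × Fin N → ℝ) :
    (genericMatrix (coeffMatrix N ν)).map (eval x) =
      symMatrix (WithLp.toLp 2 (CFC.sqrt (covMatrix N ν) *ᵥ x)) := by
  ext j k
  simp only [genericMatrix, Matrix.map_apply, Matrix.sum_apply, Matrix.smul_apply, smul_eq_mul,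
    map_sum, map_mul, eval_X, eval_C, coeffMatrix, symMatrix, Matrix.mulVec, dotProduct,
    ← Finset.sum_add_distrib, Finset.mul_sum]
  exact Finset.sum_congr rfl fun a _ => by ring

lemma fieldLaw_eq_map_pi : fieldLaw N ν = (Measure.pi fun _ => gaussianReal 0 1).map
    fun x => WithLp.toLp 2 (CFC.sqrt (covMatrix N ν) *ᵥ x) := by
  rw [fieldLaw, multivariateGaussian, ← map_pi_eq_stdGaussian,
    Measure.map_map (by fun_prop) (by fun_prop)]
  congr 1
  ext x : 1
  simp [Matrix.toEuclideanCLM_toLp]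

lemma eval_aeval_normTrace_genericMatrix_pow (p : Polynomial ℝ) (k : ℕ) (x : Fin N × Fin N → ℝ) :
    eval x (Polynomial.aeval (normTrace _ N (genericMatrix (coeffMatrix N ν) ^ k)) p) =
      p.eval (normTrace ℝ N (symMatrix (WithLp.toLp 2 (CFC.sqrt (covMatrix N ν) *ᵥ x)) ^ k)) := by
  have hmap : (genericMatrix (coeffMatrix N ν) ^ k).map (eval x) =
      symMatrix (WithLp.toLp 2 (CFC.sqrt (covMatrix N ν) *ᵥ x)) ^ k := by
    rw [← map_eval_genericMatrix_coeffMatrix, ← RingHom.mapMatrix_apply, map_pow,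
      RingHom.mapMatrix_apply]
  have htrace : eval x (normTrace _ N (genericMatrix (coeffMatrix N ν) ^ k)) =
      normTrace ℝ N (symMatrix (WithLp.toLp 2 (CFC.sqrt (covMatrix N ν) *ᵥ x)) ^ k) := by
    simp only [normTrace_apply, smul_eval, ← hmap, smul_eq_mul]
    rw [AddMonoidHom.map_trace]
  rw [← htrace, Polynomial.aeval_def, Polynomial.hom_eval₂, ← Polynomial.eval₂_id]
  congr
  ext c
  simp

lemma continuous_normTrace_symMatrix_pow (k : ℕ) :
    Continuous fun x : EuclideanSpace ℝ (Fin N × Fin N) => normTrace ℝ N (symMatrix x ^ k) := by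
  unfold symMatrix normTrace
  fun_prop

lemma continuous_eval_normTrace_symMatrix_pow (p : Polynomial ℝ) (k : ℕ) :
    Continuous fun x : EuclideanSpace ℝ (Fin N × Fin N) =>
      p.eval (normTrace ℝ N (symMatrix x ^ k)) :=
  p.continuous.comp (continuous_normTrace_symMatrix_pow k)

lemma integrable_eval_normTrace_symMatrix_pow (p : Polynomial ℝ) (k : ℕ) :
    Integrable (fun x => p.eval (normTrace ℝ N (symMatrix x ^ k))) (fieldLaw N ν) := by
  rw [fieldLaw_eq_map_pi, integrable_map_measure
    (continuous_eval_normTrace_symMatrix_pow p k).aestronglyMeasurable (by fun_prop)]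
  exact (integrable_eval_pi_gaussianReal _).congr
    (ae_of_all _ (eval_aeval_normTrace_genericMatrix_pow ν p k))

lemma integral_eval_normTrace_symMatrix_pow (p : Polynomial ℝ) (k : ℕ) :
    ∫ x, p.eval (normTrace ℝ N (symMatrix x ^ k)) ∂fieldLaw N ν =
      gaussianExpectation _
        (Polynomial.aeval (normTrace _ N (genericMatrix (coeffMatrix N ν) ^ k)) p) := by
  rw [fieldLaw_eq_map_pi, integral_map (by fun_prop)
    (continuous_eval_normTrace_symMatrix_pow p k).aestronglyMeasurable]
  simp only [gaussianExpectation_apply, eval_aeval_normTrace_genericMatrix_pow]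

/-- The covariance of the symmetrized field at lag `q`. -/
def lagWeight (q : ℤ × ℤ) : ℝ := spectralCov ν q.1 q.2 + spectralCov ν q.2 q.1

lemma spectralCov_neg (u v : ℤ) : spectralCov ν (-u) (-v) = spectralCov ν u v := by
  unfold spectralCov
  congr! 2 with q
  rw [← cos_neg]
  push_cast
  ring_nf

lemma sum_lagWeight_mul_truncShift {F : Finset (ℤ × ℤ)} (hF : ∀ q ∉ F, lagWeight ν q = 0)
    (j k l m : Fin N) :
    ∑ q ∈ F, lagWeight ν q * (truncShift ℝ N q.1 j l * truncShift ℝ N q.2 k m) =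
      lagWeight ν ((l : ℤ) - j, (m : ℤ) - k) := by
  rw [Finset.sum_eq_single ((l : ℤ) - j, (m : ℤ) - k)]
  · simp [truncShift]
  · rintro ⟨u, v⟩ - hne
    rw [ne_eq, Prod.mk.injEq, not_and_or, ← ne_eq, ← ne_eq] at hne
    rcases hne with h | h <;> simp [truncShift, h.symm]
  · exact fun h => by simp [hF _ h]

lemma hasShiftCovariance_coeffMatrix [IsFiniteMeasure ν] {F : Finset (ℤ × ℤ)}
    (hF : ∀ q ∉ F, lagWeight ν q = 0) :
    HasShiftCovariance (coeffMatrix N ν) F fun q => (N : ℝ)⁻¹ * lagWeight ν q := fun j k l m => by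
  have hexpand (x y : EuclideanSpace ℝ (Fin N × Fin N)) : symMatrix x j k * symMatrix y l m =
      (N : ℝ)⁻¹ * (x (j, k) * y (l, m) + x (j, k) * y (m, l) +
        (x (k, j) * y (l, m) + x (k, j) * y (m, l))) := by
    have hsqrt : (√N)⁻¹ * (√N)⁻¹ = (N : ℝ)⁻¹ := by rw [← mul_inv, mul_self_sqrt N.cast_nonneg]
    rw [← hsqrt, symMatrix, symMatrix]
    ring
  have hcov (a b : Fin N × Fin N) : covMatrix N ν a b =
      spectralCov ν ((b.1 : ℤ) - a.1) ((b.2 : ℤ) - a.2) := by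
    rw [← spectralCov_neg, neg_sub, neg_sub, covMatrix]
  simp only [coeffMatrix, hexpand, ← Finset.mul_sum, Finset.sum_add_distrib,
    sum_sqrt_mul_sqrt (posSemidef_covMatrix ν), hcov, mul_assoc]
  simp only [mul_add, Finset.sum_add_distrib, sum_lagWeight_mul_truncShift ν hF]
  simp only [lagWeight]
  ring

end Realization

section CharFunTaylor

variable {θ : ℝ} {n : ℕ}

lemma hasDerivAt_sum_range_mul_I_pow_div_factorial (n : ℕ) (θ : ℝ) :
    HasDerivAt (fun θ : ℝ => ∑ k ∈ Finset.range (n + 1), (θ * Complex.I) ^ k / k.factorial)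
      (Complex.I * ∑ k ∈ Finset.range n, (θ * Complex.I) ^ k / k.factorial) θ := by
  have hterm (k : ℕ) : HasDerivAt
      (fun θ : ℝ => (θ * Complex.I) ^ (k + 1) / (k + 1).factorial)
      (Complex.I * ((θ * Complex.I) ^ k / k.factorial)) θ := by
    refine ((((hasDerivAt_id θ).ofReal_comp.mul_const Complex.I).pow (k + 1)).div_const
      ((k + 1).factorial : ℂ)).congr_deriv ?_
    have hk : (k.factorial : ℂ) ≠ 0 := by exact_mod_cast k.factorial_ne_zero
    have hk' : (k : ℂ) + 1 ≠ 0 := by exact_mod_cast k.succ_ne_zero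
    push_cast [Nat.factorial_succ]
    field_simp
    simp [mul_comm]
  simp only [Finset.sum_range_succ' _ n, Finset.mul_sum, pow_zero]
  exact (HasDerivAt.fun_sum fun k _ => hterm k).add_const _

lemma norm_exp_mul_I_sub_sum_le_of_nonneg (hθ : 0 ≤ θ) (n : ℕ) :
    ‖Complex.exp (θ * Complex.I) - ∑ k ∈ Finset.range n, (θ * Complex.I) ^ k / k.factorial‖ ≤
      θ ^ n / n.factorial := by
  induction n generalizing θ with
  | zero => simp [Complex.norm_exp_ofReal_mul_I]
  | succ n ih =>
    have hderiv (t : ℝ) := ((hasDerivAt_id t).ofReal_comp.mul_const Complex.I).cexp.sub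
      (hasDerivAt_sum_range_mul_I_pow_div_factorial n t)
    have hbound (t : ℝ) : HasDerivAt (fun t : ℝ => t ^ (n + 1) / (n + 1).factorial)
        (t ^ n / n.factorial) t := by
      refine ((hasDerivAt_pow (n + 1) t).div_const _).congr_deriv ?_
      have hn : (n.factorial : ℝ) ≠ 0 := by exact_mod_cast n.factorial_ne_zero
      push_cast [Nat.factorial_succ]
      field_simp
    refine image_norm_le_of_norm_deriv_right_le_deriv_boundary
      (fun t _ => (hderiv t).continuousAt.continuousWithinAt)
      (fun t _ => (hderiv t).hasDerivWithinAt) ?_ hbound (fun t ht => ?_) (Set.right_mem_Icc.2 hθ)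
    · simp [Finset.sum_range_succ']
    · convert ih ht.1 using 1
      rw [← one_mul ‖Complex.exp _ - _‖, ← Complex.norm_I, ← norm_mul]
      congr 1
      simp
      ring

lemma norm_exp_mul_I_sub_sum_le (θ : ℝ) (n : ℕ) :
    ‖Complex.exp (θ * Complex.I) - ∑ k ∈ Finset.range n, (θ * Complex.I) ^ k / k.factorial‖ ≤
      |θ| ^ n / n.factorial := by
  rcases le_total 0 θ with h | h
  · simpa [abs_of_nonneg h] using norm_exp_mul_I_sub_sum_le_of_nonneg h n
  · rw [abs_of_nonpos h, ← RCLike.norm_conj]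
    simpa [← Complex.exp_conj] using norm_exp_mul_I_sub_sum_le_of_nonneg (neg_nonneg.2 h) n

lemma norm_charFun_sub_sum_le {μ : Measure ℝ} [IsFiniteMeasure μ]
    (hμ : ∀ k ≤ n, Integrable (fun x => x ^ k) μ) (r : ℝ) :
    ‖charFun μ r - ∑ k ∈ Finset.range n, (r * Complex.I) ^ k / k.factorial * (∫ x, x ^ k ∂μ : ℝ)‖ ≤
      |r| ^ n / n.factorial * ∫ x, |x| ^ n ∂μ := by
  have hpow (k : ℕ) (x : ℝ) : ((r * x : ℝ) * Complex.I) ^ k / k.factorial =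
      (r * Complex.I) ^ k / k.factorial * ((x ^ k : ℝ) : ℂ) := by
    push_cast
    ring
  have hint : ∀ k ∈ Finset.range n, Integrable
      (fun x : ℝ => ((r * x : ℝ) * Complex.I) ^ k / k.factorial) μ := fun k hk => by
    simp only [hpow]
    exact (hμ k (Finset.mem_range.1 hk).le).ofReal.const_mul _
  have hexp : Integrable (fun x : ℝ => Complex.exp ((r * x : ℝ) * Complex.I)) μ :=
    .of_bound (by fun_prop) 1 (.of_forall fun x => (Complex.norm_exp_ofReal_mul_I _).le)
  have hsum : charFun μ r -
      ∑ k ∈ Finset.range n, (r * Complex.I) ^ k / k.factorial * (∫ x, x ^ k ∂μ : ℝ) =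
      ∫ x : ℝ, (Complex.exp ((r * x : ℝ) * Complex.I) -
        ∑ k ∈ Finset.range n, ((r * x : ℝ) * Complex.I) ^ k / k.factorial) ∂μ := by
    rw [integral_sub hexp (integrable_finsetSum _ hint), integral_finsetSum _ hint,
      charFun_apply_real]
    simp only [hpow, integral_const_mul, integral_complex_ofReal]
    simp only [Complex.ofReal_mul]
  rw [hsum, ← integral_const_mul]
  refine norm_integral_le_of_norm_le ?_ (.of_forall fun x => ?_)
  · simpa only [abs_pow] using (hμ n le_rfl).abs.const_mul (|r| ^ n / n.factorial)
  · exact (norm_exp_mul_I_sub_sum_le _ n).trans_eq (by rw [abs_mul]; ring)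

end CharFunTaylor

section FiniteRange

variable {N : ℕ} {ν : Measure (ℝ × ℝ)} {F : Finset (ℤ × ℤ)} {r : ℝ}

lemma integral_pow_esd_symMatrix (x : EuclideanSpace ℝ (Fin N × Fin N)) (k : ℕ) :
    ∫ t, t ^ k ∂(esd (isHermitian_symMatrix x)) = normTrace ℝ N (symMatrix x ^ k) := by
  rw [integral_pow_esd, Fintype.card_fin, normTrace_apply, smul_eq_mul]

lemma normTrace_symMatrix_pow_two_mul_nonneg (x : EuclideanSpace ℝ (Fin N × Fin N)) (m : ℕ) :
    0 ≤ normTrace ℝ N (symMatrix x ^ (2 * m)) :=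
  integral_pow_esd_symMatrix x (2 * m) ▸
    integral_nonneg fun t => (even_two_mul m).pow_nonneg t

lemma norm_symCharFun_sub_sum_le [NeZero N] (x : EuclideanSpace ℝ (Fin N × Fin N)) (r : ℝ)
    (m : ℕ) :
    ‖symCharFun r x - ∑ k ∈ Finset.range (2 * m), (r * Complex.I) ^ k / k.factorial *
      (normTrace ℝ N (symMatrix x ^ k) : ℝ)‖ ≤
      r ^ (2 * m) / (2 * m).factorial * normTrace ℝ N (symMatrix x ^ (2 * m)) := by
  have h := norm_charFun_sub_sum_le (n := 2 * m)
    (fun k _ => integrable_esd (isHermitian_symMatrix x) (· ^ k)) r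
  simp only [(even_two_mul m).pow_abs, integral_pow_esd_symMatrix] at h
  exact h

lemma lintegral_enorm_le_sqrt_integral_sq {Ω : Type*} [MeasurableSpace Ω] {P : Measure Ω}
    [IsProbabilityMeasure P] {f : Ω → ℝ} (hf : MemLp f 2 P) :
    ∫⁻ ω, ‖f ω‖ₑ ∂P ≤ ENNReal.ofReal √(∫ ω, f ω ^ 2 ∂P) := by
  rw [← ofReal_integral_norm_eq_lintegral_enorm (hf.integrable one_le_two)]
  refine ENNReal.ofReal_le_ofReal (le_sqrt_of_sq_le ?_)
  have hvar := variance_nonneg (fun ω => ‖f ω‖) P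
  rw [variance_eq_sub hf.norm] at hvar
  simpa using hvar

lemma exists_tendsto_lintegral_enorm_normTrace_pow_sub [IsFiniteMeasure ν]
    (hF : ∀ q ∉ F, lagWeight ν q = 0) (k : ℕ) :
    ∃ l : ℝ, Tendsto (fun N => ∫⁻ x, ‖normTrace ℝ N (symMatrix x ^ k) - l‖ₑ ∂(fieldLaw N ν))
      atTop (𝓝 0) := by
  obtain ⟨l, hl⟩ := IsGaussianFunctional.exists_tendsto_map_sq_normTrace_pow_sub
    (fun N => isGaussianFunctional_gaussianExpectation) (fun N => isSymm_coeffMatrix ν)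
    (fun N => hasShiftCovariance_coeffMatrix ν hF) k
  have hsq (N : ℕ) := integrable_eval_normTrace_symMatrix_pow (N := N) ν
    ((Polynomial.X - Polynomial.C l) ^ 2) k
  have hint (N : ℕ) := integral_eval_normTrace_symMatrix_pow (N := N) ν
    ((Polynomial.X - Polynomial.C l) ^ 2) k
  simp only [Polynomial.eval_pow, Polynomial.eval_sub, Polynomial.eval_X, Polynomial.eval_C,
    map_pow, map_sub, Polynomial.aeval_X, Polynomial.aeval_C, MvPolynomial.algebraMap_eq]
    at hsq hint
  simp only [← hint] at hl
  refine ⟨l, tendsto_of_tendsto_of_tendsto_of_le_of_le tendsto_const_nhds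
    (by simpa using ENNReal.tendsto_ofReal hl.sqrt) (fun _ => zero_le) fun N => ?_⟩
  exact lintegral_enorm_le_sqrt_integral_sq ((memLp_two_iff_integrable_sq
    ((continuous_normTrace_symMatrix_pow k).sub continuous_const).aestronglyMeasurable).2 (hsq N))

lemma lintegral_normTrace_pow_two_mul_le [IsFiniteMeasure ν] (hF : ∀ q ∉ F, lagWeight ν q = 0)
    (m : ℕ) :
    ∫⁻ x, ENNReal.ofReal (normTrace ℝ N (symMatrix x ^ (2 * m))) ∂(fieldLaw N ν) ≤
      ENNReal.ofReal ((4 * ∑ q ∈ F, |lagWeight ν q|) ^ m * m.factorial) := by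
  have hint := integral_eval_normTrace_symMatrix_pow (N := N) ν Polynomial.X (2 * m)
  have hmom := isGaussianFunctional_gaussianExpectation.abs_map_traceProd_le
    (isSymm_coeffMatrix ν) (hasShiftCovariance_coeffMatrix (N := N) ν hF)
    (List.replicate 1 (List.replicate (2 * m) none))
  simp only [traceProd_replicate, pow_one] at hmom
  simp only [Polynomial.eval_X, Polynomial.aeval_X] at hint
  rw [← ofReal_integral_eq_lintegral_ofReal
    (by simpa using integrable_eval_normTrace_symMatrix_pow ν Polynomial.X (2 * m))
    (ae_of_all _ fun x => normTrace_symMatrix_pow_two_mul_nonneg x m), hint]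
  exact ENNReal.ofReal_le_ofReal (by simpa using le_of_abs_le hmom)

lemma tendsto_lintegral_enorm_sum_sub {ι : Type*} (s : Finset ι) {Ω : ℕ → Type*}
    [∀ N, MeasurableSpace (Ω N)] {m : ∀ N, Measure (Ω N)} {f : ι → ∀ N, Ω N → ℂ} {c : ι → ℂ}
    (hf : ∀ i N, AEStronglyMeasurable (f i N) (m N))
    (h : ∀ i, Tendsto (fun N => ∫⁻ ω, ‖f i N ω - c i‖ₑ ∂(m N)) atTop (𝓝 0)) (a : ι → ℂ) :
    Tendsto (fun N => ∫⁻ ω, ‖∑ i ∈ s, a i * f i N ω - ∑ i ∈ s, a i * c i‖ₑ ∂(m N))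
      atTop (𝓝 0) := by
  refine tendsto_of_tendsto_of_tendsto_of_le_of_le tendsto_const_nhds
    (h := fun N => ∑ i ∈ s, ‖a i‖ₑ * ∫⁻ ω, ‖f i N ω - c i‖ₑ ∂(m N)) ?_
    (fun _ => zero_le) fun N => ?_
  · simpa using tendsto_finsetSum s fun i _ => ENNReal.Tendsto.const_mul (h i) (.inr enorm_ne_top)
  · have hm (i : ι) : AEMeasurable (fun ω => ‖f i N ω - c i‖ₑ) (m N) :=
      ((hf i N).sub aestronglyMeasurable_const).enorm
    simp only [← lintegral_const_mul'' _ (hm _), ← Finset.sum_sub_distrib, ← mul_sub]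
    rw [← lintegral_finsetSum' _ fun i _ => (hm i).const_mul _]
    refine lintegral_mono fun ω => (enorm_sum_le _ _).trans_eq ?_
    simp only [enorm_mul]

lemma pow_two_mul_div_factorial_mul_le {S : ℝ} (hS : 0 ≤ S) (r : ℝ) (m : ℕ) :
    r ^ (2 * m) / (2 * m).factorial * (S ^ m * m.factorial) ≤ (r ^ 2 * S) ^ m / m.factorial := by
  have hfact : ((m.factorial : ℝ) * m.factorial) ≤ (2 * m).factorial := by
    rw [two_mul]
    exact_mod_cast Nat.le_of_dvd (Nat.factorial_pos _)
      (Nat.factorial_mul_factorial_dvd_factorial_add m m)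
  rw [div_mul_eq_mul_div, div_le_div_iff₀ (by positivity) (by positivity), pow_mul, mul_pow,
    ← mul_assoc, mul_assoc _ (m.factorial : ℝ)]
  gcongr

lemma lintegral_enorm_symCharFun_sub_sum_le [IsFiniteMeasure ν] [NeZero N]
    (hF : ∀ q ∉ F, lagWeight ν q = 0) (r : ℝ) (m : ℕ) :
    ∫⁻ x, ‖symCharFun r x - ∑ k ∈ Finset.range (2 * m), (r * Complex.I) ^ k / k.factorial *
      (normTrace ℝ N (symMatrix x ^ k) : ℝ)‖ₑ ∂(fieldLaw N ν) ≤
      ENNReal.ofReal ((r ^ 2 * (4 * ∑ q ∈ F, |lagWeight ν q|)) ^ m / m.factorial) := by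
  have hr : 0 ≤ r ^ (2 * m) / (2 * m).factorial :=
    div_nonneg ((even_two_mul m).pow_nonneg r) (Nat.cast_nonneg _)
  calc _ ≤ ∫⁻ x, ENNReal.ofReal (r ^ (2 * m) / (2 * m).factorial) *
        ENNReal.ofReal (normTrace ℝ N (symMatrix x ^ (2 * m))) ∂(fieldLaw N ν) :=
      lintegral_mono fun x => by
        rw [← ofReal_norm, ← ENNReal.ofReal_mul hr]
        exact ENNReal.ofReal_le_ofReal (norm_symCharFun_sub_sum_le x r m)
    _ ≤ ENNReal.ofReal (r ^ (2 * m) / (2 * m).factorial) *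
        ENNReal.ofReal ((4 * ∑ q ∈ F, |lagWeight ν q|) ^ m * m.factorial) := by
      rw [lintegral_const_mul' _ _ ENNReal.ofReal_ne_top]
      gcongr
      exact lintegral_normTrace_pow_two_mul_le hF m
    _ ≤ _ := by
      rw [← ENNReal.ofReal_mul hr]
      exact ENNReal.ofReal_le_ofReal (pow_two_mul_div_factorial_mul_le (by positivity) r m)

lemma exists_charFunTendsto_of_lagWeight_eq_zero [IsFiniteMeasure ν]
    (hF : ∀ q ∉ F, lagWeight ν q = 0) (r : ℝ) : ∃ c, CharFunTendsto ν r c := by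
  choose l hl using exists_tendsto_lintegral_enorm_normTrace_pow_sub hF
  refine exists_tendsto_lintegral_enorm_sub
    (fun N => (continuous_symCharFun r).aestronglyMeasurable) fun ε hε => ?_
  have hrem := ENNReal.tendsto_ofReal (FloorSemiring.tendsto_pow_div_factorial_atTop
    (r ^ 2 * (4 * ∑ q ∈ F, |lagWeight ν q|)))
  rw [ENNReal.ofReal_zero] at hrem
  obtain ⟨m, hm⟩ := (hrem.eventually_lt_const (ENNReal.half_pos hε.ne')).exists
  let a (k : ℕ) : ℂ := (r * Complex.I) ^ k / k.factorial
  have hmeas (k N : ℕ) : Measurable fun x : EuclideanSpace ℝ (Fin N × Fin N) =>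
      (normTrace ℝ N (symMatrix x ^ k) : ℂ) :=
    (Complex.continuous_ofReal.comp (continuous_normTrace_symMatrix_pow k)).measurable
  have hmain := tendsto_lintegral_enorm_sum_sub (Finset.range (2 * m))
    (fun k N => (hmeas k N).aestronglyMeasurable (μ := fieldLaw N ν)) (c := fun k => (l k : ℂ))
    (fun k => by simpa only [← Complex.ofReal_sub, ← ofReal_norm, Complex.norm_real] using hl k) a
  refine ⟨∑ k ∈ Finset.range (2 * m), a k * l k, ?_⟩
  filter_upwards [hmain.eventually_lt_const (ENNReal.half_pos hε.ne'), eventually_ne_atTop 0]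
    with N hN hN0
  have : NeZero N := ⟨hN0⟩
  have hsum : Measurable fun x : EuclideanSpace ℝ (Fin N × Fin N) =>
      ∑ k ∈ Finset.range (2 * m), a k * (normTrace ℝ N (symMatrix x ^ k) : ℂ) :=
    Finset.measurable_sum _ fun k _ => (hmeas k N).const_mul _
  have htri (x : EuclideanSpace ℝ (Fin N × Fin N)) :=
    edist_triangle (symCharFun r x) (∑ k ∈ Finset.range (2 * m),
      a k * (normTrace ℝ N (symMatrix x ^ k) : ℂ)) (∑ k ∈ Finset.range (2 * m), a k * l k)
  simp only [edist_eq_enorm_sub] at htri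
  refine (lintegral_mono htri).trans ?_
  rw [lintegral_add_left (f := fun x => ‖symCharFun r x - ∑ k ∈ Finset.range (2 * m),
    a k * (normTrace ℝ N (symMatrix x ^ k) : ℂ)‖ₑ)
    ((continuous_symCharFun r).measurable.sub hsum).enorm,
    ← ENNReal.add_halves ε]
  exact add_le_add ((lintegral_enorm_symCharFun_sub_sum_le hF r m).trans hm.le) hN.le

end FiniteRange

section TrigonometricApproximation

/-- The class of `q` in the torus `(ℝ / 2πℤ)²`, rescaled to unit periods. -/
def torusPoint (q : ℝ × ℝ) : UnitAddTorus (Fin 2) :=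
  ![((q.1 / (2 * π) : ℝ) : UnitAddCircle), ((q.2 / (2 * π) : ℝ) : UnitAddCircle)]

lemma continuous_torusPoint : Continuous torusPoint := by
  refine continuous_pi fun i => ?_
  fin_cases i <;> exact (AddCircle.continuous_mk' 1).comp (by fun_prop)

lemma injOn_torusPoint : Set.InjOn torusPoint specBox := by
  have hdiv {x : ℝ} (hx : x ∈ Set.Ioc (-π) π) :
      x / (2 * π) ∈ Set.Ioc (-1 / 2 : ℝ) (-1 / 2 + 1) := by
    rw [Set.mem_Ioc, lt_div_iff₀ two_pi_pos, div_le_iff₀ two_pi_pos]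
    constructor <;> linarith [hx.1, hx.2]
  have hinj {x y : ℝ} (hx : x ∈ Set.Ioc (-π) π) (hy : y ∈ Set.Ioc (-π) π)
      (h : ((x / (2 * π) : ℝ) : UnitAddCircle) = (y / (2 * π) : ℝ)) : x = y :=
    (div_left_inj' two_pi_pos.ne').1 ((AddCircle.coe_eq_coe_iff_of_mem_Ioc (hdiv hx) (hdiv hy)).1 h)
  exact fun p hp q hq h => Prod.ext (hinj hp.1 hq.1 (congrFun h 0)) (hinj hp.2 hq.2 (congrFun h 1))

lemma mFourier_torusPoint (n : Fin 2 → ℤ) (q : ℝ × ℝ) :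
    UnitAddTorus.mFourier n (torusPoint q) =
      Complex.exp (Complex.I * n 0 * q.1) * Complex.exp (Complex.I * n 1 * q.2) := by
  have hpi : (π : ℂ) ≠ 0 := by exact_mod_cast pi_ne_zero
  simp only [UnitAddTorus.mFourier, ContinuousMap.coe_mk, Fin.prod_univ_two, torusPoint,
    Matrix.cons_val_zero, Matrix.cons_val_one, fourier_coe_apply]
  push_cast
  field_simp

lemma measurableSet_specBox : MeasurableSet specBox := measurableSet_Ioc.prod measurableSet_Ioc

instance isFiniteMeasure_volume_restrict_specBox : IsFiniteMeasure (volume.restrict specBox) := by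
  rw [specBox, Measure.volume_eq_prod, ← Measure.prod_restrict]
  infer_instance

lemma setIntegral_exp_int_mul_of_ne_zero {n : ℤ} (hn : n ≠ 0) :
    ∫ x in Set.Ioc (-π) π, Complex.exp (Complex.I * n * x) = 0 := by
  have hperiod : Complex.exp (Complex.I * n * (π : ℝ)) = Complex.exp (Complex.I * n * (-π : ℝ)) :=
    Complex.exp_eq_exp_iff_exists_int.2 ⟨n, by push_cast; ring⟩
  rw [← intervalIntegral.integral_of_le (by linarith [pi_pos]),
    integral_exp_mul_complex (mul_ne_zero Complex.I_ne_zero (Int.cast_ne_zero.2 hn)), hperiod,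
    sub_self, zero_div]

lemma setIntegral_mFourier_torusPoint_of_ne_zero {n : Fin 2 → ℤ} (hn : n ≠ 0) :
    ∫ q in specBox, UnitAddTorus.mFourier n (torusPoint q) = 0 := by
  simp only [mFourier_torusPoint, specBox, Measure.volume_eq_prod, ← Measure.prod_restrict]
  rw [integral_prod_mul (fun x : ℝ => Complex.exp (Complex.I * n 0 * x))
    (fun y : ℝ => Complex.exp (Complex.I * n 1 * y)), mul_eq_zero]
  by_contra! h
  exact hn (funext (Fin.forall_fin_two.2 ⟨not_not.1 (mt setIntegral_exp_int_mul_of_ne_zero h.1),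
    not_not.1 (mt setIntegral_exp_int_mul_of_ne_zero h.2)⟩))

lemma exists_measurable_comp_torusPoint_eqOn {E : Type*} [MeasurableSpace E] [Nonempty E]
    {f : ℝ × ℝ → E} (hf : Measurable f) :
    ∃ g : UnitAddTorus (Fin 2) → E, Measurable g ∧ Set.EqOn (g ∘ torusPoint) f specBox := by
  obtain ⟨g, hg, hgf⟩ := (continuous_torusPoint.continuousOn.measurableEmbedding
    measurableSet_specBox injOn_torusPoint).exists_measurable_extend
      (hf.comp measurable_subtype_coe) fun _ => inferInstance
  exact ⟨g, hg, fun q hq => congrFun hgf ⟨q, hq⟩⟩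

lemma exists_nonneg_continuousMap_lintegral_enorm_sub_le {α : Type*} [TopologicalSpace α]
    [NormalSpace α] [MeasurableSpace α] [BorelSpace α] {μ : Measure α} [μ.WeaklyRegular]
    {f : α → ℝ} (hf : Integrable f μ) (hf0 : ∀ᵐ x ∂μ, 0 ≤ f x) {ε : ℝ≥0∞} (hε : ε ≠ 0) :
    ∃ g : C(α, ℝ), 0 ≤ g ∧ ∫⁻ x, ‖f x - g x‖ₑ ∂μ ≤ ε := by
  obtain ⟨g, hg, -⟩ := hf.exists_boundedContinuous_lintegral_sub_le hε
  refine ⟨(g : C(α, ℝ)) ⊔ 0, le_sup_right, (lintegral_mono_ae ?_).trans hg⟩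
  filter_upwards [hf0] with x hx
  simp only [← ofReal_norm, Real.norm_eq_abs]
  refine ENNReal.ofReal_le_ofReal ?_
  calc |f x - max (g x) 0| = |max (f x) 0 - max (g x) 0| := by rw [max_eq_left hx]
    _ ≤ |f x - g x| := abs_max_sub_max_le_abs _ _ _

lemma exists_mem_span_mFourier_nonneg_near {d : Type*} [Fintype d] {g : C(UnitAddTorus d, ℝ)}
    (hg : 0 ≤ g) {δ : ℝ} (hδ : 0 < δ) :
    ∃ p ∈ Submodule.span ℂ (Set.range (UnitAddTorus.mFourier (d := d))),
      ∀ z, 0 ≤ (p z).re ∧ |g z - (p z).re| ≤ δ := by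
  let G : C(UnitAddTorus d, ℂ) := ⟨fun z => (g z : ℂ), by fun_prop⟩
  have hG : G ∈ (Submodule.span ℂ
      (Set.range (UnitAddTorus.mFourier (d := d)))).topologicalClosure := by
    rw [UnitAddTorus.span_mFourier_closure_eq_top]
    trivial
  obtain ⟨p, hp, hGp⟩ := Metric.mem_closure_iff.1 hG (δ / 2) (half_pos hδ)
  have hone : (1 : C(UnitAddTorus d, ℂ)) ∈ Submodule.span ℂ (Set.range UnitAddTorus.mFourier) :=
    Submodule.subset_span ⟨0, UnitAddTorus.mFourier_zero⟩
  refine ⟨p + ((δ / 2 : ℝ) : ℂ) • 1, add_mem hp (Submodule.smul_mem _ _ hone), fun z => ?_⟩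
  have hnear : |g z - (p z).re| ≤ δ / 2 := by
    refine (Complex.abs_re_le_norm (G z - p z)).trans ?_
    rw [← dist_eq_norm]
    exact (ContinuousMap.dist_apply_le_dist z).trans hGp.le
  have hre : ((p + ((δ / 2 : ℝ) : ℂ) • (1 : C(UnitAddTorus d, ℂ))) z).re = (p z).re + δ / 2 := by
    simp
  rw [hre]
  have hgz : (0 : ℝ) ≤ g z := hg z
  rw [abs_le] at hnear ⊢
  refine ⟨?_, ?_, ?_⟩ <;> linarith

lemma exists_mem_span_mFourier_lintegral_enorm_sub_le {f : ℝ × ℝ → ℝ} (hf : Measurable f)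
    (hf0 : ∀ q, 0 ≤ f q) (hint : Integrable f (volume.restrict specBox)) {ε : ℝ≥0∞} (hε : ε ≠ 0) :
    ∃ p ∈ Submodule.span ℂ (Set.range (UnitAddTorus.mFourier (d := Fin 2))),
      (∀ z, 0 ≤ (p z).re) ∧ ∫⁻ q in specBox, ‖f q - (p (torusPoint q)).re‖ₑ ≤ ε := by
  have hκ := continuous_torusPoint.measurable
  obtain ⟨g, hg, hgf⟩ := exists_measurable_comp_torusPoint_eqOn hf
  have hgf' : g ∘ torusPoint =ᵐ[volume.restrict specBox] f :=
    (ae_restrict_mem measurableSet_specBox).mono hgf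
  obtain ⟨h, hh0, hh⟩ := exists_nonneg_continuousMap_lintegral_enorm_sub_le
    (μ := (volume.restrict specBox).map torusPoint) (f := g)
    ((integrable_map_measure hg.aestronglyMeasurable hκ.aemeasurable).2 (hint.congr hgf'.symm))
    ((ae_map_iff hκ.aemeasurable (measurableSet_le measurable_const hg)).2
      (hgf'.mono fun q hq => (hf0 q).trans_eq hq.symm)) (ENNReal.half_pos hε).ne'
  have hgh : Measurable fun z => ‖g z - h z‖ₑ := (hg.sub h.continuous.measurable).enorm
  rw [lintegral_map hgh hκ] at hh
  obtain ⟨δ, hδ, hδε⟩ := ENNReal.exists_nnreal_pos_mul_lt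
    (measure_ne_top (volume.restrict specBox) Set.univ) (ENNReal.half_pos hε).ne'
  obtain ⟨p, hp, hnear⟩ := exists_mem_span_mFourier_nonneg_near hh0 (NNReal.coe_pos.2 hδ)
  refine ⟨p, hp, fun z => (hnear z).1, ?_⟩
  calc ∫⁻ q in specBox, ‖f q - (p (torusPoint q)).re‖ₑ
      ≤ ∫⁻ q in specBox, (‖g (torusPoint q) - h (torusPoint q)‖ₑ + δ) := by
        refine lintegral_mono_ae (hgf'.mono fun q hq => ?_)
        have hclose : ‖h (torusPoint q) - (p (torusPoint q)).re‖ₑ ≤ δ := by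
          rw [← ofReal_norm, Real.norm_eq_abs, ← ENNReal.ofReal_coe_nnreal]
          exact ENNReal.ofReal_le_ofReal (hnear _).2
        rw [← hq, Function.comp_apply, ← sub_add_sub_cancel _ (h (torusPoint q))]
        exact (enorm_add_le _ _).trans (add_le_add_right hclose _)
    _ = (∫⁻ q in specBox, ‖g (torusPoint q) - h (torusPoint q)‖ₑ)
        + δ * (volume.restrict specBox) Set.univ := by
        rw [lintegral_add_right _ measurable_const, lintegral_const]
    _ ≤ ε / 2 + ε / 2 := add_le_add hh hδε.le
    _ = ε := ENNReal.add_halves ε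

lemma integrable_comp_torusPoint {E : Type*} [NormedAddCommGroup E]
    (g : C(UnitAddTorus (Fin 2), E)) {μ : Measure (ℝ × ℝ)} [IsFiniteMeasure μ] :
    Integrable (fun q => g (torusPoint q)) μ := by
  have hcont := g.continuous.comp continuous_torusPoint
  obtain ⟨C, hC⟩ := (isCompact_range g.continuous).isBounded.exists_norm_le
  exact .of_bound hcont.aestronglyMeasurable C (ae_of_all _ fun q => hC _ ⟨_, rfl⟩)

lemma eventually_setIntegral_mFourier_mul_eq_zero {p : C(UnitAddTorus (Fin 2), ℂ)}
    (hp : p ∈ Submodule.span ℂ (Set.range (UnitAddTorus.mFourier (d := Fin 2)))) :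
    ∀ᶠ n : Fin 2 → ℤ in cofinite,
      ∫ q in specBox, (UnitAddTorus.mFourier n * p) (torusPoint q) = 0 := by
  induction hp using Submodule.span_induction with
  | mem p hp =>
    obtain ⟨m, rfl⟩ := hp
    filter_upwards [eventually_cofinite_ne (-m)] with n hn
    simp only [ContinuousMap.mul_apply, ← UnitAddTorus.mFourier_add]
    exact setIntegral_mFourier_torusPoint_of_ne_zero (mt eq_neg_of_add_eq_zero_left hn)
  | zero => simp
  | add p₁ p₂ _ _ h₁ h₂ =>
    filter_upwards [h₁, h₂] with n hn₁ hn₂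
    simp only [mul_add, ContinuousMap.add_apply]
    rw [integral_add (integrable_comp_torusPoint _) (integrable_comp_torusPoint _), hn₁, hn₂,
      add_zero]
  | smul a p _ h =>
    filter_upwards [h] with n hn
    simp only [mul_smul_comm, ContinuousMap.smul_apply]
    rw [integral_smul, hn, smul_zero]

lemma spectralCov_withDensity_re {p : C(UnitAddTorus (Fin 2), ℂ)} (hp : ∀ z, 0 ≤ (p z).re)
    (u v : ℤ) :
    spectralCov ((volume.restrict specBox).withDensity
        fun q => ENNReal.ofReal (p (torusPoint q)).re) u v =
      ((∫ q in specBox, (UnitAddTorus.mFourier ![u, v] * p) (torusPoint q)) +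
        ∫ q in specBox, (UnitAddTorus.mFourier (-![u, v]) * p) (torusPoint q)).re / 2 := by
  have hcos (q : ℝ × ℝ) :
      (UnitAddTorus.mFourier ![u, v] (torusPoint q)).re = cos (u * q.1 + v * q.2) := by
    rw [mFourier_torusPoint, ← Complex.exp_add, ← Complex.exp_ofReal_mul_I_re]
    push_cast
    ring_nf
  have hmeas : Measurable fun q => ENNReal.ofReal (p (torusPoint q)).re :=
    (Complex.measurable_re.comp
      (p.continuous.comp continuous_torusPoint).measurable).ennreal_ofReal
  have hadd : Integrable (fun q => (UnitAddTorus.mFourier ![u, v] * p) (torusPoint q) +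
      (UnitAddTorus.mFourier (-![u, v]) * p) (torusPoint q)) (volume.restrict specBox) :=
    (integrable_comp_torusPoint _).add (integrable_comp_torusPoint _)
  rw [← integral_add (integrable_comp_torusPoint _) (integrable_comp_torusPoint _),
    ← Complex.reCLM_apply, ← Complex.reCLM.integral_comp_comm hadd, ← integral_div, spectralCov,
    integral_withDensity_eq_integral_toReal_smul hmeas (ae_of_all _ fun _ => ENNReal.ofReal_lt_top)]
  congr with q
  rw [ENNReal.toReal_ofReal (hp _), smul_eq_mul, ← hcos]
  simp only [UnitAddTorus.mFourier_neg, ContinuousMap.mul_apply, Complex.reCLM_apply,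
    Complex.add_re, Complex.mul_re, Complex.conj_re, Complex.conj_im]
  ring

lemma eventually_lagWeight_withDensity_re_eq_zero {p : C(UnitAddTorus (Fin 2), ℂ)}
    (hp : p ∈ Submodule.span ℂ (Set.range (UnitAddTorus.mFourier (d := Fin 2))))
    (hp0 : ∀ z, 0 ≤ (p z).re) :
    ∀ᶠ q in cofinite, lagWeight ((volume.restrict specBox).withDensity
      fun q => ENNReal.ofReal (p (torusPoint q)).re) q = 0 := by
  have hcoeff := eventually_setIntegral_mFourier_mul_eq_zero hp
  have hcov : ∀ᶠ q : ℤ × ℤ in cofinite, spectralCov ((volume.restrict specBox).withDensity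
      fun q => ENNReal.ofReal (p (torusPoint q)).re) q.1 q.2 = 0 := by
    have hpair : Function.Injective fun q : ℤ × ℤ => ![q.1, q.2] := fun a b h =>
      Prod.ext (congrFun h 0) (congrFun h 1)
    filter_upwards [hpair.tendsto_cofinite.eventually hcoeff,
      (neg_injective.comp hpair).tendsto_cofinite.eventually hcoeff] with q hq hq'
    rw [spectralCov_withDensity_re hp0, hq]
    simp only [Function.comp_apply] at hq'
    rw [hq', add_zero, Complex.zero_re, zero_div]
  filter_upwards [hcov, Prod.swap_injective.tendsto_cofinite.eventually hcov] with q hq hq'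
  rw [lagWeight, hq]
  exact (zero_add _).trans hq'

end TrigonometricApproximation

section AveragedRandomMeasures

variable {E : Type*} [NormedAddCommGroup E] [InnerProductSpace ℝ E] [FiniteDimensional ℝ E]
  [MeasurableSpace E] [BorelSpace E]

lemma charFun_measure_comp {Ω : Type*} [MeasurableSpace Ω] (m : Measure Ω)
    [IsProbabilityMeasure m] (κ : Kernel Ω E) [IsMarkovKernel κ] (t : E) :
    charFun (κ ∘ₘ m) t = ∫ ω, charFun (κ ω) t ∂m := by
  have hint : Integrable (fun x => Complex.exp (inner ℝ x t * Complex.I)) (κ ∘ₘ m) :=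
    .of_bound (by fun_prop) 1 (.of_forall fun x => (Complex.norm_exp_ofReal_mul_I _).le)
  simp only [charFun_apply]
  rw [Measure.comp_eq_comp_const_apply] at hint ⊢
  rw [Kernel.integral_comp hint, Kernel.const_apply]

lemma exists_charFun_eq_of_tendsto_lintegral {Ω : ℕ → Type*} [∀ N, MeasurableSpace (Ω N)]
    {m : ∀ N, Measure (Ω N)} [∀ N, IsProbabilityMeasure (m N)] {κ : ∀ N, Kernel (Ω N) E}
    [∀ N, IsMarkovKernel (κ N)] {c : E → ℂ} (hc : ContinuousAt c 0)
    (h : ∀ t, Tendsto (fun N => ∫⁻ ω, ‖charFun (κ N ω) t - c t‖ₑ ∂(m N)) atTop (𝓝 0)) :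
    ∃ μ : ProbabilityMeasure E, charFun (μ : Measure E) = c := by
  refine exists_charFun_eq_of_tendsto (μ := fun N => ⟨κ N ∘ₘ m N, inferInstance⟩) hc fun t => ?_
  rw [tendsto_iff_edist_tendsto_0]
  refine tendsto_of_tendsto_of_tendsto_of_le_of_le tendsto_const_nhds (h t)
    (fun _ => zero_le) fun N => ?_
  have hint : Integrable (fun ω => charFun (κ N ω) t) (m N) :=
    .of_bound (measurable_charFun_kernel _ _).aestronglyMeasurable 1
      (.of_forall fun ω => norm_charFun_le_one _)
  calc edist (charFun (κ N ∘ₘ m N) t) (c t) = ‖∫ ω, (charFun (κ N ω) t - c t) ∂(m N)‖ₑ := by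
        rw [edist_eq_enorm_sub, charFun_measure_comp, integral_sub hint (integrable_const _)]
        simp
    _ ≤ ∫⁻ ω, ‖charFun (κ N ω) t - c t‖ₑ ∂(m N) := enorm_integral_le_lintegral_enorm _

end AveragedRandomMeasures

section AbsolutelyContinuousSpectrum

lemma lintegral_enorm_symCharFun_sub_withDensity_le {μ : Measure (ℝ × ℝ)}
    {f g : ℝ × ℝ → ℝ≥0∞} [IsFiniteMeasure (μ.withDensity f)] [IsFiniteMeasure (μ.withDensity g)]
    (hf : Measurable f) (hg : Measurable g) {δ : ℝ} (hδ : 0 ≤ δ)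
    (hfg : ∫⁻ q, f q - g q ∂μ ≤ ENNReal.ofReal δ) (hgf : ∫⁻ q, g q - f q ∂μ ≤ ENNReal.ofReal δ)
    (N : ℕ) (r : ℝ) (c : ℂ) :
    ∫⁻ x, ‖symCharFun r x - c‖ₑ ∂(fieldLaw N (μ.withDensity f)) ≤
      ∫⁻ x, ‖symCharFun r x - c‖ₑ ∂(fieldLaw N (μ.withDensity g)) +
        2 * ENNReal.ofReal (2 * |r| * √δ) := by
  have hfin {k : ℝ × ℝ → ℝ≥0∞} (hk : ∫⁻ q, k q ∂μ ≤ ENNReal.ofReal δ) :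
      IsFiniteMeasure (μ.withDensity k) :=
    isFiniteMeasure_withDensity (hk.trans_lt ENNReal.ofReal_lt_top).ne
  have := hfin hfg
  have := hfin hgf
  have hmass {k : ℝ × ℝ → ℝ≥0∞} (hk : ∫⁻ q, k q ∂μ ≤ ENNReal.ofReal δ) :
      ENNReal.ofReal (2 * |r| * √((μ.withDensity k).real Set.univ)) ≤
        ENNReal.ofReal (2 * |r| * √δ) := by
    rw [measureReal_def, withDensity_apply _ .univ, Measure.restrict_univ]
    have := ENNReal.toReal_le_of_le_ofReal hδ hk
    exact ENNReal.ofReal_le_ofReal (by gcongr)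
  have hmax : μ.withDensity f + μ.withDensity (fun q => g q - f q) =
      μ.withDensity g + μ.withDensity (fun q => f q - g q) := by
    rw [← withDensity_add_left hf, ← withDensity_add_left hg]
    congr 1
    ext q
    simp only [Pi.add_apply, add_tsub_eq_max, max_comm]
  calc ∫⁻ x, ‖symCharFun r x - c‖ₑ ∂(fieldLaw N (μ.withDensity f))
      ≤ ∫⁻ x, ‖symCharFun r x - c‖ₑ
            ∂(fieldLaw N (μ.withDensity g + μ.withDensity fun q => f q - g q)) +
          ENNReal.ofReal (2 * |r| * √δ) := by
        rw [← hmax]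
        exact (lintegral_enorm_symCharFun_sub_le_add _ _ r c).trans
          (add_le_add_right (hmass hgf) _)
    _ ≤ ∫⁻ x, ‖symCharFun r x - c‖ₑ ∂(fieldLaw N (μ.withDensity g)) +
          ENNReal.ofReal (2 * |r| * √δ) + ENNReal.ofReal (2 * |r| * √δ) :=
        add_le_add_left ((lintegral_enorm_symCharFun_sub_add_le _ _ r c).trans
          (add_le_add_right (hmass hfg) _)) _
    _ = _ := by rw [add_assoc, ← two_mul]

lemma exists_charFunTendsto_withDensity {f : ℝ × ℝ → ℝ} (hf : Measurable f)
    (hf0 : ∀ q, 0 ≤ f q) (hint : Integrable f (volume.restrict specBox)) (r : ℝ) :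
    ∃ c, CharFunTendsto ((volume.restrict specBox).withDensity fun q => ENNReal.ofReal (f q))
      r c := by
  have := isFiniteMeasure_withDensity_ofReal hint.hasFiniteIntegral
  refine exists_tendsto_lintegral_enorm_sub
    (fun N => (continuous_symCharFun r).aestronglyMeasurable) fun ε hε => ?_
  have hsmall : Tendsto (fun δ : ℝ => 2 * ENNReal.ofReal (2 * |r| * √δ)) (𝓝[>] 0) (𝓝 0) := by
    have hcont : Continuous fun δ : ℝ => 2 * ENNReal.ofReal (2 * |r| * √δ) :=
      (ENNReal.continuous_const_mul ENNReal.ofNat_ne_top).comp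
        (ENNReal.continuous_ofReal.comp (by fun_prop))
    simpa using (hcont.tendsto 0).mono_left nhdsWithin_le_nhds
  obtain ⟨δ, hδε, hδ : 0 < δ⟩ := ((hsmall.eventually_lt_const (ENNReal.half_pos hε.ne')).and
    self_mem_nhdsWithin).exists
  obtain ⟨p, hp, hp0, hfp⟩ := exists_mem_span_mFourier_lintegral_enorm_sub_le hf hf0 hint
    (ENNReal.ofReal_pos.2 hδ).ne'
  let g : C(UnitAddTorus (Fin 2), ℝ) := ⟨fun z => (p z).re, by fun_prop⟩
  have := isFiniteMeasure_withDensity_ofReal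
    (integrable_comp_torusPoint g (μ := volume.restrict specBox)).hasFiniteIntegral
  have hfinite := eventually_cofinite.1 (eventually_lagWeight_withDensity_re_eq_zero hp hp0)
  obtain ⟨c, hc⟩ := exists_charFunTendsto_of_lagWeight_eq_zero (F := hfinite.toFinset)
    (fun q hq => not_not.1 (mt hfinite.mem_toFinset.2 hq)) r
  refine ⟨c, ?_⟩
  filter_upwards [hc.eventually_lt_const (ENNReal.half_pos hε.ne')] with N hN
  have hsub {a b : ℝ} (hb : 0 ≤ b) : ENNReal.ofReal a - ENNReal.ofReal b ≤ ‖a - b‖ₑ := by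
    rw [← ENNReal.ofReal_sub _ hb]
    exact Real.ofReal_le_enorm _
  rw [← ENNReal.add_halves ε]
  refine (lintegral_enorm_symCharFun_sub_withDensity_le
    (g := fun q => ENNReal.ofReal (g (torusPoint q))) hf.ennreal_ofReal
    (g.continuous.comp continuous_torusPoint).measurable.ennreal_ofReal hδ.le
    ((lintegral_mono fun q => hsub (hp0 _)).trans hfp)
    ((lintegral_mono fun q => (hsub (hf0 q)).trans_eq (enorm_sub_rev _ _)).trans hfp)
    N r c).trans (add_le_add hN.le hδε.le)

lemma exists_probabilityMeasure_charFunTendsto {ν : Measure (ℝ × ℝ)} [IsFiniteMeasure ν]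
    (h : ∀ r, ∃ c, CharFunTendsto ν r c) :
    ∃ μ : ProbabilityMeasure ℝ, ∀ r, CharFunTendsto ν r (charFun (μ : Measure ℝ) r) := by
  choose c hc using h
  have hc0 : c 0 = 1 := by
    simpa [sub_eq_zero] using (hc 0).norm_sub_one_le
  have hcont : ContinuousAt c 0 := by
    rw [ContinuousAt, hc0, tendsto_iff_norm_sub_tendsto_zero]
    refine squeeze_zero (fun _ => norm_nonneg _) (fun r => (hc r).norm_sub_one_le) ?_
    have hbound : Continuous fun r : ℝ => 2 * |r| * √(ν.real Set.univ) := by fun_prop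
    simpa using hbound.tendsto 0
  obtain ⟨μ, hμ⟩ := exists_charFun_eq_of_tendsto_lintegral (m := fun N => fieldLaw (N + 1) ν)
    (κ := fun N => symEsdKernel (N + 1)) hcont fun r => (tendsto_add_atTop_iff_nat 1).2 (hc r)
  exact ⟨μ, fun r => hμ ▸ hc r⟩

end AbsolutelyContinuousSpectrum

section WeakLimit

lemma esdEval_eq_integral_esd {N : ℕ} {A : Matrix (Fin N) (Fin N) ℝ} (hA : A.IsHermitian)
    (g : ℝ → ℝ) : esdEval A g = ∫ x, g x ∂(esd hA) := by
  rw [esdEval, dif_pos hA, integral_esd, Fintype.card_fin, smul_eq_mul]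

variable {Ω : Type*} [MeasurableSpace Ω] {P : Measure Ω} {X : ℤ → ℤ → Ω → ℝ}
  {ν νd : Measure (ℝ × ℝ)} {f : ℝ × ℝ → ℝ}

lemma ESDTendstoInProb.unique [IsProbabilityMeasure P]
    {A : (N : ℕ) → Ω → Matrix (Fin N) (Fin N) ℝ} {μ μ' : Measure ℝ} [IsFiniteMeasure μ]
    [IsFiniteMeasure μ'] (h : ESDTendstoInProb P A μ) (h' : ESDTendstoInProb P A μ') :
    μ = μ' := by
  refine ext_of_forall_integral_eq_of_IsFiniteMeasure fun g => ?_
  have hb : ∃ C, ∀ x, |g x| ≤ C := ⟨‖g‖, g.norm_coe_le_norm⟩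
  have hae := tendstoInMeasure_ae_unique
    (g := fun _ => ∫ x, g x ∂μ) (h := fun _ => ∫ x, g x ∂μ')
    (tendstoInMeasure_iff_norm.2 (h g g.continuous hb))
    (tendstoInMeasure_iff_norm.2 (h' g g.continuous hb))
  exact hae.exists.choose_spec

lemma StatGauss.esdTendstoInProb_scaledW [IsProbabilityMeasure P] (hX : StatGauss P X)
    (hν : SpectralDecomp P X ν νd f) {μ : Measure ℝ} [IsProbabilityMeasure μ]
    (h : ∀ r, CharFunTendsto ν r (charFun μ r)) : ESDTendstoInProb P (scaledW X) μ := by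
  intro g hg ⟨C, hC⟩ ε hε
  have := hν.finite
  rw [← tendsto_add_atTop_iff_nat 1]
  have hlim := tendsto_measure_le_abs_integral_sub_of_tendsto_charFun
    (m := fun N => fieldLaw (N + 1) ν) (κ := fun N => symEsdKernel (N + 1)) (μ := μ)
    (fun r => (tendsto_add_atTop_iff_nat 1).2 (h r)) hg hC hε
  convert hlim with N
  have hmeas : Measurable fun x => ∫ y, g y ∂(symEsdKernel (N + 1) x) :=
    hg.stronglyMeasurable.integral_kernel.measurable
  rw [← hX.map_window hν, Measure.map_apply (hX.measurable_window _)
    (measurableSet_le (f := fun _ => ε) (g := fun x => |∫ y, g y ∂(symEsdKernel (N + 1) x) -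
      ∫ y, g y ∂μ|) measurable_const (hmeas.sub_const _).norm)]
  congr with ω
  rw [scaledW_eq_symMatrix_window, esdEval_eq_integral_esd (isHermitian_symMatrix _)]
  rfl

lemma SpectralDecomp.integrable (hν : SpectralDecomp P X ν νd f) :
    Integrable f (volume.restrict specBox) := by
  have := hν.finite
  refine ⟨hν.f_meas.aestronglyMeasurable, ?_⟩
  rw [hasFiniteIntegral_iff_ofReal (.of_forall hν.f_nonneg)]
  calc ∫⁻ q in specBox, ENNReal.ofReal (f q)
      = (volume.restrict specBox).withDensity (fun q => ENNReal.ofReal (f q)) Set.univ := by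
        rw [withDensity_apply _ .univ, Measure.restrict_univ]
    _ ≤ ν Set.univ := by
        conv_rhs => rw [hν.decomp]
        exact Measure.le_add_right le_rfl _
    _ < ∞ := measure_lt_top ν _

lemma SpectralDecomp.charFunTendsto (hν : SpectralDecomp P X ν νd f) {r : ℝ} {c : ℂ}
    (h : CharFunTendsto ((volume.restrict specBox).withDensity fun q => ENNReal.ofReal (f q))
      r c) : CharFunTendsto ν r c := by
  have := hν.finite
  have := isFiniteMeasure_withDensity_ofReal hν.integrable.hasFiniteIntegral
  have : IsFiniteMeasure νd :=
    isFiniteMeasure_of_le ν (hν.decomp ▸ Measure.le_add_left le_rfl)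
  obtain ⟨s, hs, hνd⟩ := hν.discrete
  rw [hν.decomp]
  exact h.add_of_countable hs hνd

end WeakLimit

/-- **Theorem 1.** There is a deterministic probability measure `μ_f`,
determined solely by the density `f` of the absolutely continuous component of
the spectral measure, such that `ESD(W_N/√N) → μ_f` weakly in probability. -/
theorem statement0 {Ω : Type} [MeasurableSpace Ω] (P : Measure Ω)
    [IsProbabilityMeasure P] (X : ℤ → ℤ → Ω → ℝ) (ν νd : Measure (ℝ × ℝ))
    (f : ℝ × ℝ → ℝ) (hX : StatGauss P X) (hν : SpectralDecomp P X ν νd f) :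
    ∃ μf : Measure ℝ, IsProbabilityMeasure μf ∧
      ESDTendstoInProb P (scaledW X) μf ∧
      ∀ {Ω' : Type} [MeasurableSpace Ω'] (P' : Measure Ω')
        [IsProbabilityMeasure P'] (X' : ℤ → ℤ → Ω' → ℝ)
        (ν' νd' : Measure (ℝ × ℝ)),
        StatGauss P' X' → SpectralDecomp P' X' ν' νd' f →
        ∀ μ' : Measure ℝ, IsProbabilityMeasure μ' →
          ESDTendstoInProb P' (scaledW X') μ' → μ' = μf := by
  have := isFiniteMeasure_withDensity_ofReal hν.integrable.hasFiniteIntegral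
  obtain ⟨μ, hμ⟩ := exists_probabilityMeasure_charFunTendsto
    (exists_charFunTendsto_withDensity hν.f_meas hν.f_nonneg hν.integrable)
  refine ⟨μ, inferInstance, hX.esdTendstoInProb_scaledW hν fun r => hν.charFunTendsto (hμ r), ?_⟩
  intro Ω' _ P' _ X' ν' νd' hX' hν' μ' _ h'
  exact h'.unique (hX'.esdTendstoInProb_scaledW hν' fun r => hν'.charFunTendsto (hμ r))

end
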